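/- arXiv:1511.06356 — 9 statements merged into one kernel-verified Lean document; each statement's English description precedes it below -/
import Mathlib

section
/- Let α ∈ (1,2) and ρ ∈ (0,1) with ρ̂ := 1 - ρ, and assume αρ > 0 and αρ̂ > 0. Then for every γ > α - 1, the integral ∫₀^∞ e^{-γx} Φ̄(e^x) dx converges and equals (1/γ) Ψ(γ - α, αρ - 1, αρ̂ - 1). -/
open MeasureTheory Real Set

/-- `Ψ(a,b,c) := ∫₀¹ u^a (1-u)^b (1+u)^c du`. -/
noncomputable def Psi (a b c : ℝ) : ℝ :=
  ∫ u in Ioo (0:ℝ) 1, u ^ a * (1 - u) ^ b * (1 + u) ^ c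

/-- `Φ̄(z) := ∫₁^z (t-1)^{αρ-1} (t+1)^{αρ̂-1} dt`, with `ρ̂ = 1 - ρ`. -/
noncomputable def PhiBar (α ρ : ℝ) (z : ℝ) : ℝ :=
  ∫ t in Ioc (1:ℝ) z, (t - 1) ^ (α * ρ - 1) * (t + 1) ^ (α * (1 - ρ) - 1)

lemma beta_int (a b c : ℝ) (ha : -1 < a) (hb : -1 < b) :
    IntegrableOn (fun u : ℝ => u ^ a * (1 - u) ^ b * (1 + u) ^ c) (Ioo (0:ℝ) 1) := by
  have h := Complex.betaIntegral_convergent (u := ((a + 1 : ℝ) : ℂ)) (v := ((b + 1 : ℝ) : ℂ))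
    (by rw [Complex.ofReal_re]; linarith) (by rw [Complex.ofReal_re]; linarith)
  rw [intervalIntegrable_iff_integrableOn_Ioo_of_le zero_le_one] at h
  have h2 : IntegrableOn (fun u : ℝ => u ^ a * (1 - u) ^ b) (Ioo (0:ℝ) 1) := by
    refine IntegrableOn.congr_fun h.norm ?_ measurableSet_Ioo
    intro u hu
    have h1 : (0:ℝ) < 1 - u := by linarith [hu.2]
    have e : (1 - (u:ℂ)) = ((1 - u : ℝ) : ℂ) := by push_cast; rfl
    simp only [norm_mul]
    rw [e, Complex.norm_cpow_eq_rpow_re_of_pos hu.1, Complex.norm_cpow_eq_rpow_re_of_pos h1]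
    simp
  have hc : ContinuousOn (fun u : ℝ => (1 + u) ^ c) (Icc (0:ℝ) 1) := by
    apply ContinuousOn.rpow_const (by fun_prop)
    intro u hu
    left
    linarith [hu.1]
  rw [← integrableOn_Icc_iff_integrableOn_Ioo] at h2 ⊢
  exact h2.mul_continuousOn hc isCompact_Icc

lemma image_inv : (fun u : ℝ => u⁻¹) '' Ioo (0:ℝ) 1 = Ioi 1 := by
  have := inv_Ioo_0_left (zero_lt_one (α := ℝ))
  rw [inv_one] at this
  rw [← this]
  exact image_inv_eq_inv

lemma integrand_eq (b c γ u : ℝ) (hu : u ∈ Ioo (0:ℝ) 1) :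
    |-(u ^ 2)⁻¹| • ((u⁻¹ - 1) ^ b * (u⁻¹ + 1) ^ c * (u⁻¹) ^ (-γ)) =
      u ^ (γ - (b + c + 2)) * (1 - u) ^ b * (1 + u) ^ c := by
  have h0 := hu.1
  have h1 : (0:ℝ) < 1 - u := by linarith [hu.2]
  have e1 : u⁻¹ - 1 = (1 - u) * u⁻¹ := by field_simp
  have e2 : u⁻¹ + 1 = (1 + u) * u⁻¹ := by field_simp
  rw [abs_neg, abs_of_pos (by positivity), e1, e2, mul_rpow h1.le (by positivity),
    mul_rpow (by positivity) (by positivity), inv_rpow h0.le, inv_rpow h0.le, inv_rpow h0.le,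
    ← rpow_neg h0.le, ← rpow_neg h0.le, ← rpow_neg h0.le, ← rpow_natCast, ← rpow_neg h0.le,
    smul_eq_mul]
  have : γ - (b + c + 2) = -((2:ℕ):ℝ) + -b + -c + - -γ := by push_cast; ring
  rw [this, rpow_add h0, rpow_add h0, rpow_add h0]
  ring

lemma cov (b c γ : ℝ) (ha : -1 < γ - (b + c + 2)) (hb : -1 < b) :
    IntegrableOn (fun t : ℝ => (t - 1) ^ b * (t + 1) ^ c * t ^ (-γ)) (Ioi 1) ∧
    ∫ t in Ioi (1:ℝ), (t - 1) ^ b * (t + 1) ^ c * t ^ (-γ) = Psi (γ - (b + c + 2)) b c := by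
  have hd : ∀ u ∈ Ioo (0:ℝ) 1,
      HasDerivWithinAt (fun u : ℝ => u⁻¹) (-(u ^ 2)⁻¹) (Ioo (0:ℝ) 1) u :=
    fun u hu => (hasDerivAt_inv hu.1.ne').hasDerivWithinAt
  have hi : InjOn (fun u : ℝ => u⁻¹) (Ioo (0:ℝ) 1) := inv_injective.injOn
  rw [← image_inv]
  constructor
  · rw [integrableOn_image_iff_integrableOn_abs_deriv_smul measurableSet_Ioo hd hi]
    refine (beta_int _ b c ha hb).congr_fun ?_ measurableSet_Ioo
    intro u hu
    exact (integrand_eq b c γ u hu).symm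
  · rw [integral_image_eq_integral_abs_deriv_smul measurableSet_Ioo hd hi]
    exact setIntegral_congr_fun measurableSet_Ioo fun u hu => integrand_eq b c γ u hu

/-- The kernel for Fubini. -/
noncomputable def ker (b c γ : ℝ) (x t : ℝ) : ℝ :=
  if t ≤ Real.exp x then Real.exp (-γ * x) * ((t - 1) ^ b * (t + 1) ^ c) else 0

lemma ker_slice (b c γ t : ℝ) (ht : 1 < t) : (fun x => ker b c γ x t) =
    (Ici (Real.log t)).indicator
      (fun x => Real.exp (-γ * x) * ((t - 1) ^ b * (t + 1) ^ c)) := by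
  ext x
  simp only [ker, indicator, mem_Ici, Real.log_le_iff_le_exp (zero_lt_one.trans ht)]

lemma ker_slice_integrable (b c γ t : ℝ) (hγ : 0 < γ) (ht : 1 < t) :
    Integrable (fun x => ker b c γ x t) (volume.restrict (Ioi 0)) := by
  rw [ker_slice b c γ t ht]
  refine Integrable.restrict ?_
  rw [integrable_indicator_iff measurableSet_Ici, integrableOn_Ici_iff_integrableOn_Ioi]
  exact (integrableOn_exp_mul_Ioi (by linarith) _).mul_const _

lemma ker_slice_integral (b c γ t : ℝ) (hγ : 0 < γ) (ht : 1 < t) :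
    ∫ x in Ioi (0:ℝ), ker b c γ x t = 1 / γ * ((t - 1) ^ b * (t + 1) ^ c * t ^ (-γ)) := by
  have hs : Ioi (0:ℝ) ∩ Ici (Real.log t) = Ici (Real.log t) :=
    inter_eq_right.2 fun x hx => (Real.log_pos ht).trans_le hx
  rw [ker_slice b c γ t ht, setIntegral_indicator measurableSet_Ici, hs,
    integral_Ici_eq_integral_Ioi, integral_mul_const, integral_exp_mul_Ioi (by linarith),
    rpow_def_of_pos (zero_lt_one.trans ht), mul_comm (-γ)]
  field_simp

lemma ker_nonneg (b c γ x t : ℝ) (ht : 1 < t) : 0 ≤ ker b c γ x t := by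
  unfold ker
  have : 0 < t - 1 := by linarith
  split_ifs <;> positivity

lemma ker_integrable (b c γ : ℝ) (ha : -1 < γ - (b + c + 2)) (hb : -1 < b) (hγ : 0 < γ) :
    Integrable (Function.uncurry (ker b c γ))
      ((volume.restrict (Ioi (0:ℝ))).prod (volume.restrict (Ioi (1:ℝ)))) := by
  have hm : Measurable (Function.uncurry (ker b c γ)) := by
    unfold ker Function.uncurry
    refine Measurable.ite (measurableSet_le (by fun_prop) (by fun_prop)) (by fun_prop)
      (by fun_prop)
  rw [integrable_prod_iff' hm.aestronglyMeasurable]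
  constructor
  · filter_upwards [ae_restrict_mem measurableSet_Ioi] with t ht
    exact ker_slice_integrable b c γ t hγ ht
  · refine ((cov b c γ ha hb).1.const_mul (1 / γ)).congr ?_
    filter_upwards [ae_restrict_mem measurableSet_Ioi] with t ht
    rw [← ker_slice_integral b c γ t hγ ht]
    refine integral_congr_ae (Filter.Eventually.of_forall fun x => ?_)
    exact (Real.norm_of_nonneg (ker_nonneg b c γ x t ht)).symm

lemma ker_inner (α ρ γ x : ℝ) :
    ∫ t in Ioi (1:ℝ), ker (α * ρ - 1) (α * (1 - ρ) - 1) γ x t =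
      Real.exp (-γ * x) * PhiBar α ρ (Real.exp x) := by
  have : (fun t => ker (α * ρ - 1) (α * (1 - ρ) - 1) γ x t) = (Iic (Real.exp x)).indicator
      (fun t => Real.exp (-γ * x) * ((t - 1) ^ (α * ρ - 1) * (t + 1) ^ (α * (1 - ρ) - 1))) := by
    ext t
    simp only [ker, indicator, mem_Iic]
  rw [this, setIntegral_indicator measurableSet_Iic, Ioi_inter_Iic, integral_const_mul, PhiBar]

theorem stmt_2 (α ρ : ℝ) (hα : α ∈ Ioo (1:ℝ) 2) (hρ : ρ ∈ Ioo (0:ℝ) 1)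
    (hαρ : 0 < α * ρ) (hαρ' : 0 < α * (1 - ρ)) (γ : ℝ) (hγ : α - 1 < γ) :
    IntegrableOn (fun x : ℝ => Real.exp (-γ * x) * PhiBar α ρ (Real.exp x)) (Ioi (0:ℝ)) ∧
    (∫ x in Ioi (0:ℝ), Real.exp (-γ * x) * PhiBar α ρ (Real.exp x))
      = (1 / γ) * Psi (γ - α) (α * ρ - 1) (α * (1 - ρ) - 1) := by
  have hg : 0 < γ := by linarith [hα.1]
  have hab : γ - (α * ρ - 1 + (α * (1 - ρ) - 1) + 2) = γ - α := by ring
  have ha : -1 < γ - (α * ρ - 1 + (α * (1 - ρ) - 1) + 2) := by rw [hab]; linarith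
  have hb : -1 < α * ρ - 1 := by linarith
  have hK := ker_integrable _ _ γ ha hb hg
  constructor
  · have h := hK.integral_prod_left
    simp only [Function.uncurry_apply_pair, ker_inner] at h
    exact h
  · have h := integral_integral_swap hK
    simp only [ker_inner] at h
    rw [h, setIntegral_congr_fun measurableSet_Ioi
      (fun t ht => ker_slice_integral _ _ γ t hg ht), integral_const_mul, (cov _ _ γ ha hb).2, hab]
end

section
/- Let α ∈ (1,2) and ρ ∈ (0,1) with ρ̂ := 1 - ρ, and assume αρ > 0 and αρ̂ > 0. Then for every λ > 0, ∫₀^∞ e^{-(λ+α-1)x} [ (e^x - 1)^{αρ-1} (e^x + 1)^{αρ̂} - (α-1) Φ̄(e^x) ] dx = Ψ(λ-1, αρ-1, αρ̂) - ((α-1)/(λ+α-1)) Ψ(λ-1, αρ-1, αρ̂-1). -/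
open MeasureTheory Real Set

lemma aux_cov (g : ℝ → ℝ) :
    (IntegrableOn g (Ioo 0 1) ↔ IntegrableOn (fun x => Real.exp (-x) * g (Real.exp (-x))) (Ioi 0)) ∧
    ∫ u in Ioo (0:ℝ) 1, g u = ∫ x in Ioi (0:ℝ), Real.exp (-x) * g (Real.exp (-x)) := by
  have him : (fun x : ℝ => Real.exp (-x)) '' Ioi 0 = Ioo 0 1 := by
    ext u
    constructor
    · rintro ⟨x, hx, rfl⟩
      exact ⟨Real.exp_pos _, by simpa using hx⟩
    · rintro ⟨h0, h1⟩
      refine ⟨-Real.log u, ?_, ?_⟩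
      · simpa using Real.log_neg h0 h1
      · simp [Real.exp_log h0]
  have hd : ∀ x ∈ Ioi (0:ℝ), HasDerivWithinAt (fun x : ℝ => Real.exp (-x)) (-Real.exp (-x)) (Ioi 0) x := by
    intro x _
    simpa using ((hasDerivAt_neg x).exp).hasDerivWithinAt
  have hinj : InjOn (fun x : ℝ => Real.exp (-x)) (Ioi 0) := by
    intro x _ y _ h
    simpa using h
  constructor
  · rw [← him, integrableOn_image_iff_integrableOn_abs_deriv_smul measurableSet_Ioi hd hinj]
    simp [abs_of_pos, Real.exp_pos]
  · rw [← him, integral_image_eq_integral_abs_deriv_smul measurableSet_Ioi hd hinj]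
    simp [abs_of_pos, Real.exp_pos]

lemma aux_exp (g : ℝ → ℝ) (x : ℝ) :
    ∫ t in Ioc (1:ℝ) (Real.exp x), g t = ∫ y in Ioc (0:ℝ) x, Real.exp y * g (Real.exp y) := by
  have him : Real.exp '' Ioc 0 x = Ioc 1 (Real.exp x) := by
    ext u
    constructor
    · rintro ⟨x, hx, rfl⟩
      exact ⟨by simpa using hx.1, by simpa using hx.2⟩
    · rintro ⟨h0, h1⟩
      have hu : 0 < u := by linarith
      exact ⟨Real.log u, ⟨Real.log_pos h0, (Real.log_le_iff_le_exp hu).2 h1⟩, Real.exp_log hu⟩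
  rw [← him, integral_image_eq_integral_abs_deriv_smul measurableSet_Ioc
    (fun y _ => (Real.hasDerivAt_exp y).hasDerivWithinAt) Real.exp_injective.injOn]
  simp [abs_of_pos, Real.exp_pos]

lemma aux_fub (s : ℝ) (hs : 0 < s) (h : ℝ → ℝ) (hm : Measurable h)
    (hi : IntegrableOn (fun y => Real.exp (-s * y) * h y) (Ioi 0)) :
    IntegrableOn (fun x => Real.exp (-s * x) * ∫ y in Ioc 0 x, h y) (Ioi 0) ∧
    ∫ x in Ioi (0:ℝ), Real.exp (-s * x) * ∫ y in Ioc 0 x, h y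
      = 1 / s * ∫ y in Ioi (0:ℝ), Real.exp (-s * y) * h y := by
  set μ := (volume : Measure ℝ).restrict (Ioi 0) with hμ
  set F : ℝ × ℝ → ℝ := fun p => {p : ℝ × ℝ | p.2 ≤ p.1}.indicator
    (fun p => Real.exp (-s * p.1) * h p.2) p with hF
  have hFm : Measurable F := by
    apply Measurable.indicator
    · fun_prop
    · exact measurableSet_le measurable_snd measurable_fst
  have hsec : ∀ y, (fun x => F (x, y)) = (Ici y).indicator (fun x => Real.exp (-s * x) * h y) := by
    intro y; ext x; simp [hF, indicator]
  have hsec' : ∀ x, (fun y => F (x, y)) = (Iic x).indicator (fun y => Real.exp (-s * x) * h y) := by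
    intro x; ext y; simp [hF, indicator]
  have hexpint : ∀ y c : ℝ, ∫ x in Ioi y, Real.exp (-s * x) * c = 1 / s * (Real.exp (-s * y) * c) := by
    intro y c
    rw [integral_mul_const, integral_exp_mul_Ioi (by linarith)]
    field_simp
  have hres : ∀ y ∈ Ioi (0:ℝ), μ.restrict (Ici y) = volume.restrict (Ici y) := by
    intro y hy
    rw [hμ, Measure.restrict_restrict measurableSet_Ici]
    congr 1
    ext z; simp only [mem_inter_iff, mem_Ici, mem_Ioi] at *; constructor
    · exact fun h => h.1
    · exact fun h => ⟨h, by linarith⟩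
  have hint : Integrable F (μ.prod μ) := by
    rw [integrable_prod_iff' hFm.aestronglyMeasurable]
    constructor
    · filter_upwards [ae_restrict_mem measurableSet_Ioi] with y hy
      rw [hsec, integrable_indicator_iff measurableSet_Ici, IntegrableOn, hres y hy,
        ← IntegrableOn, integrableOn_Ici_iff_integrableOn_Ioi]
      exact (integrableOn_exp_mul_Ioi (by linarith) y).mul_const _
    · refine (hi.norm.const_mul (1/s)).congr ?_
      filter_upwards [ae_restrict_mem measurableSet_Ioi] with y hy
      have : (fun x => ‖F (x, y)‖) = (Ici y).indicator (fun x => Real.exp (-s * x) * ‖h y‖) := by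
        ext x
        have := congrFun (hsec y) x
        rw [this, norm_indicator_eq_indicator_norm]
        simp
      rw [this, integral_indicator measurableSet_Ici, hres y hy, integral_Ici_eq_integral_Ioi,
        hexpint]
      simp
  have hin : ∀ x, ∫ y, F (x, y) ∂μ = Real.exp (-s * x) * ∫ y in Ioc 0 x, h y := by
    intro x
    rw [hsec', integral_indicator measurableSet_Iic, hμ,
      Measure.restrict_restrict measurableSet_Iic, inter_comm, Ioi_inter_Iic, integral_const_mul]
  constructor
  · have := hint.integral_prod_left
    simp only [hin] at this
    exact this
  · have := integral_integral_swap (f := fun x y => F (x, y)) hint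
    simp only [hin] at this
    rw [this, ← integral_const_mul]
    apply integral_congr_ae
    filter_upwards [ae_restrict_mem measurableSet_Ioi] with y hy
    rw [hsec, integral_indicator measurableSet_Ici, hres y hy, integral_Ici_eq_integral_Ioi,
        hexpint]

lemma aux_psi (a b c : ℝ) (ha : -1 < a) (hb : -1 < b) :
    IntegrableOn (fun u : ℝ => u ^ a * (1 - u) ^ b * (1 + u) ^ c) (Ioo 0 1) := by
  have h := Complex.betaIntegral_convergent (u := ((a + 1 : ℝ) : ℂ)) (v := ((b + 1 : ℝ) : ℂ))
    (by simp; linarith) (by simp; linarith)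
  rw [intervalIntegrable_iff_integrableOn_Ioo_of_le zero_le_one] at h
  have h2 : IntegrableOn (fun u : ℝ => u ^ a * (1 - u) ^ b) (Ioo 0 1) := by
    refine h.norm.congr ?_
    filter_upwards [ae_restrict_mem measurableSet_Ioo] with u hu
    have e : (1 : ℂ) - u = ((1 - u : ℝ) : ℂ) := by push_cast; rfl
    rw [norm_mul, e, Complex.norm_cpow_eq_rpow_re_of_pos hu.1,
      Complex.norm_cpow_eq_rpow_re_of_pos (by linarith [hu.2])]
    simp
  have h3 : ContinuousOn (fun u : ℝ => (1 + u) ^ c) (Icc 0 1) := by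
    apply ContinuousOn.rpow_const (by fun_prop)
    intro u hu; left; linarith [hu.1]
  rw [← integrableOn_Icc_iff_integrableOn_Ioo] at h2 ⊢
  exact h2.mul_continuousOn h3 isCompact_Icc

lemma aux_alg (x p q s l : ℝ) (hx : 0 < x) (h : s + 1 = l + p + q + 1) :
    Real.exp (-x) * (Real.exp (-x) ^ (l - 1) * (1 - Real.exp (-x)) ^ p * (1 + Real.exp (-x)) ^ q)
      = Real.exp (-s * x) * ((Real.exp x - 1) ^ p * (Real.exp x + 1) ^ q) := by
  have h1 : Real.exp (-x) < 1 := by simpa using hx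
  have h0 := Real.exp_pos (-x)
  have e1 : Real.exp x - 1 = Real.exp x * (1 - Real.exp (-x)) := by
    rw [mul_sub, ← Real.exp_add]; simp
  have e2 : Real.exp x + 1 = Real.exp x * (1 + Real.exp (-x)) := by
    rw [mul_add, ← Real.exp_add]; simp
  rw [e1, e2, Real.mul_rpow (Real.exp_pos _).le (by linarith),
    Real.mul_rpow (Real.exp_pos _).le (by linarith), ← Real.exp_mul, ← Real.exp_mul, ← Real.exp_mul]
  have : Real.exp (-s * x) * Real.exp (x * p) * Real.exp (x * q)
      = Real.exp (-x) * Real.exp (-x * (l - 1)) := by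
    rw [← Real.exp_add, ← Real.exp_add, ← Real.exp_add]
    congr 1
    have : s = l + p + q := by linarith
    rw [this]; ring
  linear_combination (-(1 - Real.exp (-x)) ^ p * (1 + Real.exp (-x)) ^ q) * this

theorem stmt_3 (α ρ : ℝ) (hα : α ∈ Ioo (1:ℝ) 2) (hρ : ρ ∈ Ioo (0:ℝ) 1)
    (hαρ : 0 < α * ρ) (hαρ' : 0 < α * (1 - ρ)) (l : ℝ) (hl : 0 < l) :
    (∫ x in Ioi (0:ℝ),
        Real.exp (-(l + α - 1) * x) *
          ((Real.exp x - 1) ^ (α * ρ - 1) * (Real.exp x + 1) ^ (α * (1 - ρ))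
            - (α - 1) * PhiBar α ρ (Real.exp x)))
      = Psi (l - 1) (α * ρ - 1) (α * (1 - ρ))
        - ((α - 1) / (l + α - 1)) * Psi (l - 1) (α * ρ - 1) (α * (1 - ρ) - 1) := by
  have hs : 0 < l + α - 1 := by linarith [hα.1]
  have key : ∀ q s : ℝ, s = l + (α * ρ - 1) + q →
      IntegrableOn (fun x => Real.exp (-s * x) *
        ((Real.exp x - 1) ^ (α * ρ - 1) * (Real.exp x + 1) ^ q)) (Ioi 0) ∧
      ∫ x in Ioi (0:ℝ), Real.exp (-s * x) *
        ((Real.exp x - 1) ^ (α * ρ - 1) * (Real.exp x + 1) ^ q) = Psi (l - 1) (α * ρ - 1) q := by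
    intro q s h
    have hc := aux_cov (fun u : ℝ => u ^ (l - 1) * (1 - u) ^ (α * ρ - 1) * (1 + u) ^ q)
    constructor
    · refine (hc.1.1 (aux_psi _ _ _ (by linarith) (by linarith))).congr_fun ?_ measurableSet_Ioi
      intro x hx
      exact aux_alg x _ _ s l hx (by linarith)
    · rw [Psi, hc.2]
      refine setIntegral_congr_fun measurableSet_Ioi ?_
      intro x hx
      exact (aux_alg x _ _ s l hx (by linarith)).symm
  obtain ⟨i1, v1⟩ := key (α * (1 - ρ)) (l + α - 1) (by ring)
  obtain ⟨i2, v2⟩ := key (α * (1 - ρ) - 1) (l + α - 2) (by ring)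
  have e : ∀ y : ℝ, Real.exp (-(l + α - 2) * y) *
        ((Real.exp y - 1) ^ (α * ρ - 1) * (Real.exp y + 1) ^ (α * (1 - ρ) - 1))
      = Real.exp (-(l + α - 1) * y) * (Real.exp y *
        ((Real.exp y - 1) ^ (α * ρ - 1) * (Real.exp y + 1) ^ (α * (1 - ρ) - 1))) := by
    intro y
    rw [← mul_assoc (Real.exp (-(l + α - 1) * y)), ← Real.exp_add]
    congr 2; ring
  simp only [e] at i2 v2
  obtain ⟨i3, v3⟩ := aux_fub (l + α - 1) hs _ (by fun_prop) i2
  rw [v2] at v3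
  have hphi : ∀ x, PhiBar α ρ (Real.exp x) = ∫ y in Ioc (0:ℝ) x, (Real.exp y *
        ((Real.exp y - 1) ^ (α * ρ - 1) * (Real.exp y + 1) ^ (α * (1 - ρ) - 1))) := by
    intro x
    exact aux_exp (fun t => (t - 1) ^ (α * ρ - 1) * (t + 1) ^ (α * (1 - ρ) - 1)) x
  simp only [← hphi] at i3 v3
  have : ∀ x, Real.exp (-(l + α - 1) * x) *
          ((Real.exp x - 1) ^ (α * ρ - 1) * (Real.exp x + 1) ^ (α * (1 - ρ))
            - (α - 1) * PhiBar α ρ (Real.exp x)) =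
      Real.exp (-(l + α - 1) * x) *
          ((Real.exp x - 1) ^ (α * ρ - 1) * (Real.exp x + 1) ^ (α * (1 - ρ)))
      - (α - 1) * (Real.exp (-(l + α - 1) * x) * PhiBar α ρ (Real.exp x)) := by
    intro x; ring
  simp only [this]
  rw [integral_sub i1 (i3.const_mul _), integral_const_mul, v1, v3]
  ring
end

section
/- Let α ∈ (0,1) and ρ ∈ (0,1) with ρ̂ := 1 - ρ. Then for every x > 0, ∫_{-x}^{x} (Γ(1-αρ)/(Γ(1-α)Γ(αρ̂))) · (x+z)/(2|z|)^{α} · (x-|z|)^{αρ̂-1} (x+|z|)^{αρ-1} dz = 1; that is, the function appearing in Proposition 1.1 is a probability density on (-x, x). -/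
open MeasureTheory Real Set

lemma aux_beta_integrable (a c : ℝ) (ha : 0 < a) (hc : 0 < c) :
    IntegrableOn (fun u : ℝ => u ^ (a - 1) * (1 - u) ^ (c - 1)) (Ioo 0 1) := by
  have h := Complex.betaIntegral_convergent (u := (a:ℂ)) (v := (c:ℂ)) (by simpa) (by simpa)
  rw [intervalIntegrable_iff_integrableOn_Ioo_of_le zero_le_one] at h
  refine (IntegrableOn.congr_fun h.norm ?_ measurableSet_Ioo)
  intro u hu
  have h1 : (0:ℝ) < 1 - u := by linarith [hu.2]
  have e : (1 - (u:ℂ)) = ((1 - u : ℝ) : ℂ) := by push_cast; rfl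
  simp only [norm_mul]
  rw [e, Complex.norm_cpow_eq_rpow_re_of_pos hu.1, Complex.norm_cpow_eq_rpow_re_of_pos h1]
  simp

lemma aux_beta_value (a c : ℝ) (ha : 0 < a) (hc : 0 < c) :
    ∫ u in Ioo (0:ℝ) 1, u ^ (a - 1) * (1 - u) ^ (c - 1)
      = Real.Gamma a * Real.Gamma c / Real.Gamma (a + c) := by
  have h := Complex.betaIntegral_eq_Gamma_mul_div (a:ℂ) (c:ℂ) (by simpa) (by simpa)
  rw [Complex.betaIntegral, intervalIntegral.integral_of_le zero_le_one,
    ← integral_Ioc_eq_integral_Ioo.symm] at h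
  have h2 : ∫ u in Ioo (0:ℝ) 1, (u:ℂ) ^ ((a:ℂ) - 1) * (1 - (u:ℂ)) ^ ((c:ℂ) - 1)
      = ∫ u in Ioo (0:ℝ) 1, ((u ^ (a - 1) * (1 - u) ^ (c - 1) : ℝ) : ℂ) := by
    refine setIntegral_congr_fun measurableSet_Ioo ?_
    intro u hu
    have h1 : (0:ℝ) ≤ 1 - u := by linarith [hu.2]
    simp only
    rw [Complex.ofReal_mul, Complex.ofReal_cpow hu.1.le, Complex.ofReal_cpow h1]
    push_cast
    rfl
  rw [h2, integral_complex_ofReal, ← Complex.ofReal_add, Complex.Gamma_ofReal,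
    Complex.Gamma_ofReal, Complex.Gamma_ofReal] at h
  exact_mod_cast h

lemma aux_alg_s5 (a b x u t C w : ℝ) (hx : 0 < x) (hu : u ∈ Ioo (0:ℝ) 1)
    (ht : t = x * ((1 - u) / (1 + u))) :
    |2 * x / (1 + u) ^ 2| * (C * (w / (2 * t) ^ (a + b)) * (x - t) ^ (a - 1)
      * (x + t) ^ (b - 1)) =
    C * (w / (2 * x)) * (u ^ (a - 1) * (1 - u) ^ ((1 - (a + b)) - 1)) := by
  obtain ⟨h0, h1⟩ := hu
  have h1 : 0 < 1 - u := by linarith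
  have h2 : 0 < 1 + u := by linarith
  have e1 : 2 * t = 2 * x * (1 - u) / (1 + u) := by rw [ht]; ring
  have e2 : x - t = 2 * x * u / (1 + u) := by rw [ht]; field_simp; ring
  have e3 : x + t = 2 * x / (1 + u) := by rw [ht]; field_simp; ring
  rw [e1, e2, e3, abs_of_pos (by positivity)]
  have e4 : (1 - (a + b)) - 1 = -(a+b) := by ring
  rw [e4, rpow_neg h1.le, rpow_sub_one (by positivity), rpow_sub_one (by positivity),
    rpow_sub_one (by positivity)]
  rw [div_rpow (by positivity) h2.le, div_rpow (by positivity) h2.le,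
    div_rpow (by positivity) h2.le, mul_rpow (by positivity) h1.le,
    mul_rpow (by positivity) h0.le]
  rw [rpow_add (x := 2 * x) (by positivity), rpow_add h2]
  have p1 : 0 < (2 * x) ^ a := by positivity
  have p2 : 0 < (2 * x) ^ b := by positivity
  have p3 : 0 < (1 + u) ^ a := by positivity
  have p4 : 0 < (1 + u) ^ b := by positivity
  have p5 : 0 < (1 - u) ^ (a + b) := by positivity
  have p6 : 0 < u ^ a := by positivity
  generalize (2 * x) ^ a = P1 at *
  generalize (2 * x) ^ b = P2 at *
  generalize (1 + u) ^ a = P3 at *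
  generalize (1 + u) ^ b = P4 at *
  generalize (1 - u) ^ (a + b) = P5 at *
  generalize u ^ a = P6 at *
  field_simp

lemma aux_image (x : ℝ) (hx : 0 < x) :
    (fun u : ℝ => x * ((1 - u) / (1 + u))) '' Ioo 0 1 = Ioo 0 x := by
  ext z
  constructor
  · rintro ⟨u, ⟨h0, h1⟩, rfl⟩
    have h1 : 0 < 1 - u := by linarith
    have h2 : 0 < 1 + u := by linarith
    refine ⟨by positivity, ?_⟩
    have : (1 - u) / (1 + u) < 1 := by rw [div_lt_one h2]; linarith
    simp only
    nlinarith
  · rintro ⟨h0, h1⟩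
    have h2 : 0 < x + z := by linarith
    refine ⟨(x - z) / (x + z), ⟨div_pos (by linarith) h2, ?_⟩, ?_⟩
    · rw [div_lt_one h2]; linarith
    · have e1 : 1 - (x - z) / (x + z) = 2 * z / (x + z) := by field_simp; ring
      have e2 : 1 + (x - z) / (x + z) = 2 * x / (x + z) := by field_simp; ring
      simp only
      rw [e1, e2]
      field_simp

lemma aux_deriv (x u : ℝ) (hu : u ∈ Ioo (0:ℝ) 1) :
    HasDerivAt (fun u : ℝ => x * ((1 - u) / (1 + u))) (-(2 * x / (1 + u) ^ 2)) u := by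
  have h2 : (1 + u) ≠ 0 := by linarith [hu.1]
  have := ((((hasDerivAt_id u).const_sub 1).div ((hasDerivAt_id u).const_add 1) h2).const_mul x)
  refine this.congr_deriv ?_
  simp only [id]
  field_simp
  ring

lemma aux_inj (x : ℝ) (hx : 0 < x) :
    InjOn (fun u : ℝ => x * ((1 - u) / (1 + u))) (Ioo 0 1) := by
  intro u hu v hv h
  have h2 : (1 + u) ≠ 0 := by linarith [hu.1]
  have h3 : (1 + v) ≠ 0 := by linarith [hv.1]
  simp only at h
  have h := mul_left_cancel₀ hx.ne' h
  rw [div_eq_div_iff h2 h3] at h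
  linarith

/-- Integrability and value on the half line piece after weighting. -/
lemma aux_half (a b x C : ℝ) (ha : 0 < a) (hab : a + b < 1) (hx : 0 < x) :
    IntegrableOn (fun t : ℝ => C * (2 * x / (2 * t) ^ (a + b)) * (x - t) ^ (a - 1)
      * (x + t) ^ (b - 1)) (Ioo 0 x) ∧
    ∫ t in Ioo 0 x, C * (2 * x / (2 * t) ^ (a + b)) * (x - t) ^ (a - 1)
      * (x + t) ^ (b - 1) =
      C * (Real.Gamma a * Real.Gamma (1 - (a + b)) / Real.Gamma (1 - b)) := by
  have hd : ∀ u ∈ Ioo (0:ℝ) 1, HasDerivWithinAt (fun u : ℝ => x * ((1 - u) / (1 + u)))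
      (-(2 * x / (1 + u) ^ 2)) (Ioo 0 1) u := fun u hu => (aux_deriv x u hu).hasDerivWithinAt
  have key : EqOn (fun u : ℝ => C * (u ^ (a - 1) * (1 - u) ^ ((1 - (a + b)) - 1)))
      (fun u : ℝ => |-(2 * x / (1 + u) ^ 2)| • (fun t : ℝ => C * (2 * x / (2 * t) ^ (a + b))
        * (x - t) ^ (a - 1) * (x + t) ^ (b - 1)) (x * ((1 - u) / (1 + u)))) (Ioo 0 1) := by
    intro u hu
    simp only [smul_eq_mul, abs_neg]
    rw [aux_alg_s5 a b x u _ C (2 * x) hx hu rfl, div_self (by positivity), mul_one]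
  constructor
  · rw [← aux_image x hx,
      integrableOn_image_iff_integrableOn_abs_deriv_smul measurableSet_Ioo hd (aux_inj x hx)]
    exact IntegrableOn.congr_fun ((aux_beta_integrable a (1 - (a + b)) ha (by linarith)).const_mul C)
      key measurableSet_Ioo
  · rw [← aux_image x hx,
      integral_image_eq_integral_abs_deriv_smul measurableSet_Ioo hd (aux_inj x hx),
      ← setIntegral_congr_fun measurableSet_Ioo key, integral_const_mul,
      aux_beta_value a _ ha (by linarith)]
    congr 3
    ring_nf

theorem stmt_5 (α ρ : ℝ) (hα : α ∈ Ioo (0:ℝ) 1) (hρ : ρ ∈ Ioo (0:ℝ) 1)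
    (x : ℝ) (hx : 0 < x) :
    (∫ z in Ioo (-x) x,
        (Real.Gamma (1 - α * ρ) / (Real.Gamma (1 - α) * Real.Gamma (α * (1 - ρ)))) *
          ((x + z) / (2 * |z|) ^ α) *
          (x - |z|) ^ (α * (1 - ρ) - 1) * (x + |z|) ^ (α * ρ - 1)) = 1 := by
  obtain ⟨hα0, hα1⟩ := hα
  obtain ⟨hρ0, hρ1⟩ := hρ
  have ha : 0 < α * (1 - ρ) := mul_pos hα0 (by linarith)
  have hb : 0 < α * ρ := mul_pos hα0 hρ0
  have hab : α * (1 - ρ) + α * ρ = α := by ring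
  set C := Real.Gamma (1 - α * ρ) / (Real.Gamma (1 - α) * Real.Gamma (α * (1 - ρ))) with hC
  obtain ⟨hI, hV⟩ := aux_half (α * (1 - ρ)) (α * ρ) x C ha (by linarith) hx
  rw [hab] at hI hV
  set F : ℝ → ℝ := fun z => C * ((x + z) / (2 * |z|) ^ α) *
          (x - |z|) ^ (α * (1 - ρ) - 1) * (x + |z|) ^ (α * ρ - 1) with hF
  set G : ℝ → ℝ := fun t => C * (2 * x / (2 * t) ^ α) * (x - t) ^ (α * (1 - ρ) - 1)
      * (x + t) ^ (α * ρ - 1) with hG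
  have hFG : ∀ z ∈ Ioo 0 x, F z = (x + z) / (2 * x) * G z := by
    intro z hz
    simp only [hF, hG, abs_of_pos hz.1]
    field_simp
  have hFG' : ∀ z ∈ Ioo 0 x, F (-z) = (x - z) / (2 * x) * G z := by
    intro z hz
    simp only [hF, hG, abs_neg, abs_of_pos hz.1]
    field_simp
    ring
  have hb1 : ∀ w : ℝ → ℝ, Continuous w → (∀ z ∈ Ioo 0 x, |w z| ≤ 1) →
      IntegrableOn (fun z => w z * G z) (Ioo 0 x) := by
    intro w hw hw1
    refine Integrable.bdd_mul (c := 1) hI hw.aestronglyMeasurable ?_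
    exact (ae_restrict_iff' measurableSet_Ioo).2 (Filter.Eventually.of_forall hw1)
  have i1 : IntegrableOn F (Ioo 0 x) := by
    refine IntegrableOn.congr_fun (hb1 (fun z => (x + z) / (2 * x)) (by fun_prop) ?_)
      (fun z hz => (hFG z hz).symm) measurableSet_Ioo
    intro z hz
    have := hz.1
    have := hz.2
    rw [abs_of_pos (by positivity), div_le_one (by positivity)]
    linarith
  have i2 : IntegrableOn (fun z => F (-z)) (Ioo 0 x) := by
    refine IntegrableOn.congr_fun (hb1 (fun z => (x - z) / (2 * x)) (by fun_prop) ?_)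
      (fun z hz => (hFG' z hz).symm) measurableSet_Ioo
    intro z hz
    have := hz.1
    have := hz.2
    rw [abs_of_pos (div_pos (by linarith) (by positivity)), div_le_one (by positivity)]
    linarith
  have j1 : IntervalIntegrable F volume 0 x :=
    (intervalIntegrable_iff_integrableOn_Ioo_of_le hx.le).2 i1
  have j2 : IntervalIntegrable (fun z => F (-z)) volume 0 x :=
    (intervalIntegrable_iff_integrableOn_Ioo_of_le hx.le).2 i2
  have j3 : IntervalIntegrable F volume (-x) 0 := by
    have := (IntervalIntegrable.iff_comp_neg (f := F) (a := -x) (b := 0)).2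
    simp only [neg_neg, neg_zero] at this
    exact this j2.symm
  have hneg : ∫ z in (-x)..0, F z = ∫ z in (0:ℝ)..x, F (-z) := by
    rw [intervalIntegral.integral_comp_neg]; simp
  rw [← integral_Ioc_eq_integral_Ioo, ← intervalIntegral.integral_of_le (by linarith),
    ← intervalIntegral.integral_add_adjacent_intervals j3 j1, hneg,
    ← intervalIntegral.integral_add j2 j1, intervalIntegral.integral_of_le hx.le,
    integral_Ioc_eq_integral_Ioo, setIntegral_congr_fun (g := G) measurableSet_Ioo, hV, hC]
  · have g1 := (Real.Gamma_pos_of_pos ha).ne'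
    have g2 := (Real.Gamma_pos_of_pos (show 0 < 1 - α by linarith)).ne'
    have g3 := (Real.Gamma_pos_of_pos (show 0 < 1 - α * ρ by nlinarith)).ne'
    field_simp
  · intro z hz
    simp only
    rw [hFG z hz, hFG' z hz]
    field_simp
    ring
end

section
/- Let α ∈ (1,2) and ρ ∈ (0,1) with ρ̂ := 1 - ρ, and assume αρ > 0 and αρ̂ > 0. Then the function u ↦ u^{1-α} (u-1)^{αρ-1} (u+1)^{αρ̂-1} - (α-1) u^{-α} Φ̄(u) is integrable on (1, ∞) and (α-1) ∫₁^∞ [ u^{1-α} (u-1)^{αρ-1} (u+1)^{αρ̂-1} - (α-1) u^{-α} Φ̄(u) ] du = 1. -/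
open MeasureTheory Real Set

lemma aux_bigO (a b : ℝ) :
    (fun t : ℝ => (t - 1) ^ (a - 1) * (t + 1) ^ (b - 1) - t ^ (a + b - 2)) =O[Filter.atTop]
      (fun t : ℝ => t ^ (a + b - 3)) := by
  have hd : DifferentiableAt ℝ (fun x : ℝ => (1 - x) ^ (a - 1) * (1 + x) ^ (b - 1)) 0 := by
    apply DifferentiableAt.mul
    · exact DifferentiableAt.rpow_const (by fun_prop) (by norm_num)
    · exact DifferentiableAt.rpow_const (by fun_prop) (by norm_num)
  have h1 := hd.isBigO_sub
  have h2 := h1.comp_tendsto tendsto_inv_atTop_zero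
  have h3 := (Asymptotics.isBigO_refl (fun t : ℝ => t ^ (a + b - 2)) Filter.atTop).mul h2
  refine (h3.congr' ?_ ?_)
  · filter_upwards [Filter.eventually_gt_atTop 1] with t ht
    have ht0 : 0 < t := by linarith
    have e1 : t - 1 = t * (1 - t⁻¹) := by field_simp
    have e2 : t + 1 = t * (1 + t⁻¹) := by field_simp
    have hi : t⁻¹ < 1 := inv_lt_one_of_one_lt₀ ht
    have hi0 : 0 < t⁻¹ := by positivity
    rw [e1, e2, mul_rpow ht0.le (by linarith), mul_rpow ht0.le (by linarith)]
    have e3 : t ^ (a + b - 2) = t ^ (a - 1) * t ^ (b - 1) := by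
      rw [← rpow_add ht0]; congr 1; ring
    simp only [Function.comp, e3]
    simp
    ring
  · filter_upwards [Filter.eventually_gt_atTop 1] with t ht
    have ht0 : 0 < t := by linarith
    simp only [Function.comp, sub_zero]
    rw [← rpow_neg_one, ← rpow_add ht0]; congr 1; ring

lemma aux_f_int (a b : ℝ) (ha : 0 < a) (z : ℝ) :
    IntegrableOn (fun t : ℝ => (t - 1) ^ (a - 1) * (t + 1) ^ (b - 1)) (Ioc 1 z) := by
  rcases le_or_gt z 1 with hz | hz
  · simp [Ioc_eq_empty_of_le hz]
  rw [← intervalIntegrable_iff_integrableOn_Ioc_of_le hz.le]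
  apply IntervalIntegrable.mul_continuousOn
  · have := (intervalIntegral.intervalIntegrable_rpow' (a := 0) (b := z - 1)
      (r := a - 1) (by linarith)).comp_sub_right 1
    simpa using this
  · intro t ht
    rw [uIcc_of_le hz.le] at ht
    refine (ContinuousAt.rpow_const (by fun_prop) (Or.inl ?_)).continuousWithinAt
    linarith [ht.1]

lemma aux_h_cont (a b : ℝ) :
    ContinuousOn (fun t : ℝ => (t - 1) ^ (a - 1) * (t + 1) ^ (b - 1) - t ^ (a + b - 2))
      (Ioi 1) := by
  intro t ht
  have ht : 1 < t := ht
  refine ContinuousAt.continuousWithinAt ?_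
  refine ContinuousAt.sub (ContinuousAt.mul ?_ ?_) ?_
  · exact ContinuousAt.rpow_const (by fun_prop) (Or.inl (by linarith))
  · exact ContinuousAt.rpow_const (by fun_prop) (Or.inl (by linarith))
  · exact ContinuousAt.rpow_const (by fun_prop) (Or.inl (by linarith))

lemma aux_pow_int (c z : ℝ) : IntegrableOn (fun t : ℝ => t ^ c) (Ioc 1 z) := by
  have : ContinuousOn (fun t : ℝ => t ^ c) (Icc 1 z) := by
    intro t ht
    exact (ContinuousAt.rpow_const (by fun_prop)
      (Or.inl (by linarith [ht.1]))).continuousWithinAt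
  exact this.integrableOn_Icc.mono_set Ioc_subset_Icc_self

lemma aux_h_int (a b : ℝ) (ha : 0 < a) (hab : a + b < 2) :
    IntegrableOn (fun t : ℝ => (t - 1) ^ (a - 1) * (t + 1) ^ (b - 1) - t ^ (a + b - 2))
      (Ioi 1) := by
  rw [← Ioc_union_Ioi_eq_Ioi (one_le_two (α := ℝ))]
  refine IntegrableOn.union ((aux_f_int a b ha 2).sub (aux_pow_int _ 2)) ?_
  have hc : ContinuousOn (fun t : ℝ => (t - 1) ^ (a - 1) * (t + 1) ^ (b - 1) - t ^ (a + b - 2))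
      (Ici 2) := (aux_h_cont a b).mono (fun t ht => mem_Ioi.2 (lt_of_lt_of_le one_lt_two (mem_Ici.1 ht)))
  have := (hc.locallyIntegrableOn measurableSet_Ici).integrableOn_of_isBigO_atTop
    (aux_bigO a b) ⟨Ioi 1, Filter.Ioi_mem_atTop 1,
      integrableOn_Ioi_rpow_of_lt (by linarith) one_pos⟩
  exact this.mono_set Ioi_subset_Ici_self

theorem stmt_6 (α ρ : ℝ) (hα : α ∈ Ioo (1:ℝ) 2) (hρ : ρ ∈ Ioo (0:ℝ) 1)
    (hαρ : 0 < α * ρ) (hαρ' : 0 < α * (1 - ρ)) :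
    IntegrableOn
      (fun u : ℝ => u ^ (1 - α) * (u - 1) ^ (α * ρ - 1) * (u + 1) ^ (α * (1 - ρ) - 1)
        - (α - 1) * u ^ (-α) * PhiBar α ρ u) (Ioi (1:ℝ)) ∧
    (α - 1) *
      (∫ u in Ioi (1:ℝ),
        (u ^ (1 - α) * (u - 1) ^ (α * ρ - 1) * (u + 1) ^ (α * (1 - ρ) - 1)
          - (α - 1) * u ^ (-α) * PhiBar α ρ u)) = 1 := by
  obtain ⟨h1, h2⟩ := hα
  have hα1 : 0 < α - 1 := by linarith
  have hab : α * ρ + α * (1 - ρ) = α := by ring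
  set a := α * ρ with ha
  set b := α * (1 - ρ) with hb
  set h : ℝ → ℝ := fun t => (t - 1) ^ (a - 1) * (t + 1) ^ (b - 1) - t ^ (a + b - 2) with hh
  have hint : IntegrableOn h (Ioi 1) := aux_h_int a b hαρ (by linarith)
  have hcont : ContinuousOn h (Ioi 1) := aux_h_cont a b
  set H : ℝ → ℝ := fun u => ∫ t in (1:ℝ)..u, h t with hH
  have hII : ∀ u, 1 ≤ u → IntervalIntegrable h volume 1 u := fun u hu => by
    rw [intervalIntegrable_iff_integrableOn_Ioc_of_le hu]
    exact hint.mono_set Ioc_subset_Ioi_self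
  have hHder : ∀ u ∈ Ioi (1:ℝ), HasDerivAt H (h u) u := fun u hu => by
    have hn : Ioi (1:ℝ) ∈ nhds u := Ioi_mem_nhds hu
    refine intervalIntegral.integral_hasDerivAt_right (hII u (le_of_lt hu)) ?_
      (hcont.continuousAt hn)
    exact hcont.stronglyMeasurableAtFilter isOpen_Ioi u hu
  have hHlim : Filter.Tendsto H Filter.atTop (nhds (∫ t in Ioi 1, h t)) :=
    intervalIntegral_tendsto_integral_Ioi 1 hint Filter.tendsto_id
  have hHcont1 : ContinuousWithinAt H (Ici 1) 1 := by
    have hc : ContinuousOn H (Icc 1 2) := by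
      have := intervalIntegral.continuousOn_primitive_interval' (hII 2 one_le_two)
        (left_mem_uIcc)
      rwa [uIcc_of_le one_le_two] at this
    exact (hc 1 (by simp)).mono_of_mem_nhdsWithin (Icc_mem_nhdsGE one_lt_two)
  have hHbd : ∀ u, 1 < u → ‖H u‖ ≤ ∫ t in Ioi 1, ‖h t‖ := fun u hu => by
    simp only [hH]
    rw [intervalIntegral.integral_of_le hu.le]
    refine (norm_integral_le_integral_norm _).trans ?_
    exact setIntegral_mono_set hint.norm (Filter.Eventually.of_forall fun _ => norm_nonneg _)
      (Filter.Eventually.of_forall (Ioc_subset_Ioi_self : Ioc (1:ℝ) u ⊆ Ioi 1))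
  have hPhi : ∀ u, 1 < u → PhiBar α ρ u = H u + (u ^ (α - 1) - 1) / (α - 1) := fun u hu => by
    have e : (u ^ (α - 1) - 1) / (α - 1) = ∫ t in (1:ℝ)..u, t ^ (a + b - 2) := by
      rw [integral_rpow (Or.inl (by linarith))]
      rw [hab]
      have : α - 2 + 1 = α - 1 := by ring
      rw [this]; simp
    rw [e]
    simp only [hH, PhiBar, intervalIntegral.integral_of_le hu.le, hh]
    rw [integral_sub (aux_f_int a b hαρ u) (aux_pow_int _ u)]
    simp
    rfl
  set F : ℝ → ℝ := fun u => u ^ (1 - α) * h u + u ^ (-α) - (α - 1) * (u ^ (-α) * H u) with hF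
  have hFeq : EqOn (fun u : ℝ => u ^ (1 - α) * (u - 1) ^ (a - 1) * (u + 1) ^ (b - 1)
        - (α - 1) * u ^ (-α) * PhiBar α ρ u) F (Ioi 1) := by
    intro u hu
    have hu : 1 < u := hu
    have hu0 : 0 < u := by linarith
    have e1 : u ^ (1 - α) * u ^ (α - 2) = u⁻¹ := by
      rw [← rpow_add hu0, ← rpow_neg_one]; congr 1; ring
    have e2 : u ^ (-α) * u ^ (α - 1) = u⁻¹ := by
      rw [← rpow_add hu0, ← rpow_neg_one]; congr 1; ring
    simp only [hF, hPhi u hu, hh, hab]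
    have e3 : (α - 1) * u ^ (-α) * (H u + (u ^ (α - 1) - 1) / (α - 1)) =
      (α - 1) * (u ^ (-α) * H u) + u ^ (-α) * u ^ (α - 1) - u ^ (-α) := by
      field_simp
      ring
    rw [e3]
    linear_combination e1 - e2
  have hpint : IntegrableOn (fun u : ℝ => u ^ (-α)) (Ioi 1) :=
    integrableOn_Ioi_rpow_of_lt (by linarith) one_pos
  have hpc : ∀ c : ℝ, ContinuousOn (fun u : ℝ => u ^ c) (Ioi 1) := fun c u hu =>
    (ContinuousAt.rpow_const (by fun_prop)
      (Or.inl (by linarith [mem_Ioi.1 hu]))).continuousWithinAt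
  have hFint : IntegrableOn F (Ioi 1) := by
    refine (Integrable.add ?_ hpint).sub (Integrable.const_mul ?_ _)
    · refine Integrable.bdd_mul (c := 1) hint
        ((hpc _).aestronglyMeasurable measurableSet_Ioi) ?_
      filter_upwards [ae_restrict_mem measurableSet_Ioi] with u hu
      have hu : 1 < u := hu
      rw [Real.norm_of_nonneg (by positivity)]
      exact rpow_le_one_of_one_le_of_nonpos hu.le (by linarith)
    · refine Integrable.mul_bdd (c := ∫ t in Ioi 1, ‖h t‖) hpint ?_ ?_
      · exact ContinuousOn.aestronglyMeasurable
          (fun u hu => (hHder u hu).continuousAt.continuousWithinAt) measurableSet_Ioi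
      · filter_upwards [ae_restrict_mem measurableSet_Ioi] with u hu
        exact hHbd u hu
  refine ⟨hFint.congr_fun hFeq.symm measurableSet_Ioi, ?_⟩
  rw [setIntegral_congr_fun measurableSet_Ioi hFeq]
  have hlim0 : Filter.Tendsto (fun u : ℝ => u ^ (1 - α)) Filter.atTop (nhds 0) := by
    have := tendsto_rpow_neg_atTop hα1
    simpa using this
  have key := integral_Ioi_of_hasDerivAt_of_tendsto
    (f := fun u => u ^ (1 - α) * (H u - 1 / (α - 1))) (f' := F) (a := 1)
    (m := 0 * ((∫ t in Ioi 1, h t) - 1 / (α - 1))) ?_ ?_ hFint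
    (hlim0.mul (hHlim.sub_const _))
  · rw [key]
    simp only [hH, intervalIntegral.integral_same]
    simp
    field_simp
  · refine ContinuousWithinAt.mul ?_ (hHcont1.sub continuousWithinAt_const)
    exact (ContinuousAt.rpow_const (by fun_prop) (Or.inl (by norm_num))).continuousWithinAt
  · intro u hu
    have hu0 : 0 < u := by linarith [mem_Ioi.1 hu]
    have d := (Real.hasDerivAt_rpow_const (x := u) (p := 1 - α) (Or.inl hu0.ne')).mul
      ((hHder u hu).sub_const (1 / (α - 1)))
    refine d.congr_deriv ?_
    have : 1 - α - 1 = -α := by ring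
    simp only [hF, this]
    field_simp
    ring
end

section
/- Let α ∈ (0,1) and ρ ∈ (0,1) with ρ̂ := 1 - ρ. Then ∫₀¹ u^{-α} (1-u)^{αρ̂-1} (1+u)^{αρ-1} du = 2^{α-1} Γ(αρ̂) Γ(1-α) / Γ(1-αρ). -/
open MeasureTheory Real Set

theorem stmt_8 (α ρ : ℝ) (hα : α ∈ Ioo (0:ℝ) 1) (hρ : ρ ∈ Ioo (0:ℝ) 1) :
    (∫ u in Ioo (0:ℝ) 1,
        u ^ (-α) * (1 - u) ^ (α * (1 - ρ) - 1) * (1 + u) ^ (α * ρ - 1))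
      = 2 ^ (α - 1) * Real.Gamma (α * (1 - ρ)) * Real.Gamma (1 - α)
          / Real.Gamma (1 - α * ρ) := by
  obtain ⟨ha0, ha1⟩ := hα
  obtain ⟨hr0, hr1⟩ := hρ
  have hp : 0 < α * (1 - ρ) := mul_pos ha0 (by linarith)
  have hq : 0 < 1 - α := by linarith
  have himg : (fun v : ℝ => (1 - v) / (1 + v)) '' Ioo (0:ℝ) 1 = Ioo (0:ℝ) 1 := by
    have key : ∀ v ∈ Ioo (0:ℝ) 1, (1 - v) / (1 + v) ∈ Ioo (0:ℝ) 1 := by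
      rintro v ⟨h0, h1⟩
      exact ⟨div_pos (by linarith) (by linarith), by rw [div_lt_one (by linarith)]; linarith⟩
    apply Subset.antisymm
    · rintro _ ⟨v, hv, rfl⟩
      exact key v hv
    · intro v hv
      refine ⟨_, key v hv, ?_⟩
      have : 1 + v ≠ 0 := by linarith [hv.1]
      simp only
      field_simp
      ring
  have hinj : InjOn (fun v : ℝ => (1 - v) / (1 + v)) (Ioo (0:ℝ) 1) := by
    intro x hx y hy h
    have h1 : 1 + x ≠ 0 := by linarith [hx.1]
    have h2 : 1 + y ≠ 0 := by linarith [hy.1]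
    simp only at h
    rw [div_eq_div_iff h1 h2] at h
    linarith
  have hder : ∀ x ∈ Ioo (0:ℝ) 1, HasDerivWithinAt (fun v : ℝ => (1 - v) / (1 + v))
      (-(2 / (1 + x) ^ 2)) (Ioo (0:ℝ) 1) x := by
    intro x hx
    have h1 : 1 + x ≠ 0 := by linarith [hx.1]
    have := ((hasDerivAt_id x).const_sub 1).div ((hasDerivAt_id x).const_add 1) h1
    refine HasDerivAt.hasDerivWithinAt ?_
    convert! this using 1
    simp only [id]
    field_simp
    ring
  have hcv := integral_image_eq_integral_abs_deriv_smul measurableSet_Ioo hder hinj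
    (fun u => u ^ (-α) * (1 - u) ^ (α * (1 - ρ) - 1) * (1 + u) ^ (α * ρ - 1))
  rw [himg] at hcv
  rw [hcv]
  have hpt : ∀ x ∈ Ioo (0:ℝ) 1, |(-(2 / (1 + x) ^ 2))| •
      (((1 - x) / (1 + x)) ^ (-α) * (1 - (1 - x) / (1 + x)) ^ (α * (1 - ρ) - 1)
        * (1 + (1 - x) / (1 + x)) ^ (α * ρ - 1))
      = 2 ^ (α - 1) * (x ^ (α * (1 - ρ) - 1) * (1 - x) ^ ((1 - α) - 1)) := by
    rintro x ⟨h0, h1⟩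
    have hx : 0 < 1 + x := by linarith
    have hy : 0 < 1 - x := by linarith
    have e1 : 1 - (1 - x) / (1 + x) = 2 * x / (1 + x) := by field_simp; ring
    have e2 : 1 + (1 - x) / (1 + x) = 2 / (1 + x) := by field_simp; ring
    rw [e1, e2, abs_neg, abs_of_pos (by positivity), smul_eq_mul,
      div_rpow hy.le hx.le, div_rpow (by positivity) hx.le, div_rpow (by norm_num) hx.le,
      mul_rpow (by norm_num) h0.le]
    have e3 : (2:ℝ) ^ (α - 1) = 2 * 2 ^ (α * (1 - ρ) - 1) * 2 ^ (α * ρ - 1) := by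
      nth_rewrite 2 [← rpow_one (2:ℝ)]
      rw [← rpow_add (by norm_num), ← rpow_add (by norm_num)]
      congr 1; ring
    have e4 : (1 + x) ^ 2 * (1 + x) ^ (-α) * (1 + x) ^ (α * (1 - ρ) - 1)
        * (1 + x) ^ (α * ρ - 1) = 1 := by
      rw [← rpow_natCast, ← rpow_add hx, ← rpow_add hx, ← rpow_add hx]
      convert rpow_zero (1 + x) using 2
      push_cast; ring
    rw [e3, show (1 - α) - 1 = -α by ring]
    calc _ = 2 * 2 ^ (α * (1 - ρ) - 1) * 2 ^ (α * ρ - 1) *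
          (x ^ (α * (1 - ρ) - 1) * (1 - x) ^ (-α)) / ((1 + x) ^ 2 * (1 + x) ^ (-α)
            * (1 + x) ^ (α * (1 - ρ) - 1) * (1 + x) ^ (α * ρ - 1)) := by
          simp only [div_eq_mul_inv, mul_inv]; ring
      _ = _ := by rw [e4, div_one]
  rw [setIntegral_congr_fun measurableSet_Ioo hpt, integral_const_mul]
  have hb := ProbabilityTheory.beta_eq_betaIntegralReal (α * (1 - ρ)) (1 - α) hp hq
  have hB : ∫ x in Ioo (0:ℝ) 1, x ^ (α * (1 - ρ) - 1) * (1 - x) ^ ((1 - α) - 1)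
      = ProbabilityTheory.beta (α * (1 - ρ)) (1 - α) := by
    rw [hb, Complex.betaIntegral, intervalIntegral.integral_of_le zero_le_one,
      integral_Ioc_eq_integral_Ioo]
    rw [← Complex.ofReal_re (∫ x in Ioo (0:ℝ) 1, _), ← integral_complex_ofReal]
    congr 1
    refine setIntegral_congr_fun measurableSet_Ioo ?_
    rintro x ⟨h0, h1⟩
    simp only
    rw [Complex.ofReal_mul, Complex.ofReal_cpow h0.le, Complex.ofReal_cpow (by linarith)]
    push_cast
    rfl
  rw [hB, ProbabilityTheory.beta, show α * (1 - ρ) + (1 - α) = 1 - α * ρ by ring]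
  ring
end

section
/- Let α ∈ (0,1) and ρ ∈ (0,1) with ρ̂ := 1 - ρ. Then (Γ(1-αρ)/Γ(αρ̂)) ∫₀¹ u^{-α} (1-u)^{αρ̂-1} (1+u)^{αρ} du - (Γ(1-αρ̂)/Γ(αρ)) ∫₀¹ u^{-α} (1-u)^{αρ} (1+u)^{αρ̂-1} du = Γ(1-αρ) Γ(1-αρ̂). -/
open MeasureTheory Real Set

lemma beta_lint (p q : ℝ) (hp : 0 < p) (hq : 0 < q) :
    ∫⁻ x in Ioo (0:ℝ) 1, ENNReal.ofReal (x ^ (p - 1) * (1 - x) ^ (q - 1))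
      = ENNReal.ofReal (ProbabilityTheory.beta p q) := by
  have h := ProbabilityTheory.lintegral_betaPDF_eq_one hp hq
  have hB := ProbabilityTheory.beta_pos hp hq
  rw [ProbabilityTheory.lintegral_betaPDF] at h
  have h2 : ∀ x : ℝ, ENNReal.ofReal (x ^ (p - 1) * (1 - x) ^ (q - 1)) =
      ENNReal.ofReal (ProbabilityTheory.beta p q) *
      ENNReal.ofReal (1 / ProbabilityTheory.beta p q * x ^ (p - 1) * (1 - x) ^ (q - 1)) := by
    intro x
    rw [← ENNReal.ofReal_mul hB.le]
    congr 1
    field_simp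
  simp_rw [h2]
  rw [lintegral_const_mul _ (by fun_prop), h, mul_one]

lemma feyn (p q s : ℝ) (hp : 0 < p) (hq : 0 < q) (hs : 0 < s) :
    ∫⁻ u in Ioo (0:ℝ) 1,
      ENNReal.ofReal (u ^ (p - 1) * (1 - u) ^ (q - 1) * (u + s * (1 - u)) ^ (-p - q))
      = ENNReal.ofReal (s ^ (-q)) * ENNReal.ofReal (ProbabilityTheory.beta p q) := by
  have hD : ∀ u ∈ Ioo (0:ℝ) 1, 0 < u + s * (1 - u) := by
    intro u hu
    have : 0 < 1 - u := by linarith [hu.2]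
    have := hu.1
    positivity
  have himg : (fun u : ℝ => u / (u + s * (1 - u))) '' Ioo (0:ℝ) 1 = Ioo (0:ℝ) 1 := by
    ext x
    constructor
    · rintro ⟨u, hu, rfl⟩
      have h1 := hD u hu
      refine ⟨div_pos hu.1 h1, ?_⟩
      rw [div_lt_one h1]
      nlinarith [hu.2]
    · rintro ⟨h0, h1⟩
      have h1' : 0 < 1 - x := by linarith
      have h2 : 0 < 1 - x + s * x := by positivity
      refine ⟨s * x / (1 - x + s * x), ⟨by positivity, ?_⟩, ?_⟩
      · rw [div_lt_one h2]; linarith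
      · have h3 : s * x / (1 - x + s * x) + s * (1 - s * x / (1 - x + s * x))
            = s / (1 - x + s * x) := by
          field_simp
          ring
        simp only [h3]
        field_simp
  have hinj : InjOn (fun u : ℝ => u / (u + s * (1 - u))) (Ioo (0:ℝ) 1) := by
    intro u hu v hv h
    have h1 := hD u hu
    have h2 := hD v hv
    simp only at h
    rw [div_eq_div_iff h1.ne' h2.ne'] at h
    have : s * (u - v) = 0 := by linarith
    rcases mul_eq_zero.1 this with h | h <;> linarith
  have hder : ∀ u ∈ Ioo (0:ℝ) 1, HasDerivWithinAt (fun u : ℝ => u / (u + s * (1 - u)))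
      (s / (u + s * (1 - u)) ^ 2) (Ioo (0:ℝ) 1) u := by
    intro u hu
    have h1 := hD u hu
    have hd : HasDerivAt (fun u : ℝ => u + s * (1 - u)) (1 + s * (0 - 1)) u :=
      (hasDerivAt_id u).add (((hasDerivAt_const u 1).sub (hasDerivAt_id u)).const_mul s)
    have := ((hasDerivAt_id u).div hd h1.ne').hasDerivWithinAt (s := Ioo (0:ℝ) 1)
    refine this.congr_deriv ?_
    simp only [id]
    congr 1
    ring
  have key := lintegral_image_eq_lintegral_abs_deriv_mul measurableSet_Ioo hder hinj
    (fun x => ENNReal.ofReal (x ^ (p - 1) * (1 - x) ^ (q - 1)))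
  rw [himg, beta_lint p q hp hq] at key
  rw [key, ← lintegral_const_mul _ (by fun_prop)]
  refine setLIntegral_congr_fun measurableSet_Ioo ?_
  intro u hu
  have h1 := hD u hu
  have h2 : 0 < 1 - u := by linarith [hu.2]
  have h3 := hu.1
  simp only
  rw [← ENNReal.ofReal_mul (by positivity), ← ENNReal.ofReal_mul (by positivity)]
  congr 1
  rw [abs_of_pos (by positivity)]
  have e : 1 - u / (u + s * (1 - u)) = s * (1 - u) / (u + s * (1 - u)) := by
    field_simp
    ring
  rw [e, div_rpow h3.le h1.le, div_rpow (by positivity) h1.le, mul_rpow hs.le h2.le]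
  generalize u + s * (1 - u) = D at h1
  have e1 : D ^ (-p - q) = 1 / (D ^ 2 * D ^ (p - 1) * D ^ (q - 1)) := by
    rw [eq_div_iff (by positivity), ← rpow_natCast, ← rpow_add h1, ← rpow_add h1, ← rpow_add h1]
    rw [show -p - q + (((2:ℕ):ℝ) + (p - 1) + (q - 1)) = 0 by push_cast; ring, rpow_zero]
  have e2 : s ^ (-q) * (s * s ^ (q - 1)) = 1 := by
    rw [rpow_sub_one hs.ne', rpow_neg hs.le]
    have := rpow_pos_of_pos hs q
    field_simp
  rw [e1]
  field_simp
  linear_combination (-1 : ℝ) * e2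

lemma fub (p q : ℝ) (hp : 0 < p) (hq : 0 < q) (k : ℝ → ℝ) (hk : Measurable k)
    (A : Set ℝ) (hA : MeasurableSet A) (hA0 : ∀ s ∈ A, 0 < s) :
    ∫⁻ u in Ioo (0:ℝ) 1, ENNReal.ofReal (u ^ (p - 1) * (1 - u) ^ (q - 1)) *
      (∫⁻ s in A, ENNReal.ofReal ((u + s * (1 - u)) ^ (-p - q) * k s))
    = (∫⁻ s in A, ENNReal.ofReal (s ^ (-q) * k s)) *
        ENNReal.ofReal (ProbabilityTheory.beta p q) := by
  have m1 : ∀ u : ℝ, Measurable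
    fun s : ℝ => ENNReal.ofReal ((u + s * (1 - u)) ^ (-p - q) * k s) := by
    intro u; fun_prop
  simp_rw [← lintegral_const_mul _ (m1 _)]
  rw [lintegral_lintegral_swap (by fun_prop), ← lintegral_mul_const _ (by fun_prop)]
  refine setLIntegral_congr_fun hA ?_
  intro s hs
  have hs0 := hA0 s hs
  have h := feyn p q s hp hq hs0
  simp only
  rw [ENNReal.ofReal_mul (by positivity), mul_right_comm, ← h, mul_comm,
    ← lintegral_const_mul _ (by fun_prop)]
  refine setLIntegral_congr_fun measurableSet_Ioo ?_
  intro u hu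
  have h2 : 0 < 1 - u := by linarith [hu.2]
  have h3 := hu.1
  simp only
  rw [ENNReal.ofReal_mul (p := (u + s * (1 - u)) ^ (-p - q)) (by positivity),
    ENNReal.ofReal_mul (p := u ^ (p - 1) * (1 - u) ^ (q - 1)) (by positivity)]
  ring

lemma ftc (x y : ℝ) (hxy : x ≤ y) (F f : ℝ → ℝ) (hc : ContinuousOn F (Icc x y))
    (hd : ∀ s ∈ Ioo x y, HasDerivAt F (f s) s) (hf : ∀ s ∈ Ioo x y, 0 ≤ f s) :
    ∫⁻ s in Ioo x y, ENNReal.ofReal (f s) = ENNReal.ofReal (F y - F x) := by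
  have hi := intervalIntegral.integrableOn_deriv_of_nonneg hc hd hf
  rw [← intervalIntegral.integral_eq_sub_of_hasDerivAt_of_le hxy hc hd
    ((intervalIntegrable_iff_integrableOn_Ioc_of_le hxy).2 hi),
    intervalIntegral.integral_of_le hxy, MeasureTheory.integral_Ioc_eq_integral_Ioo,
    ofReal_integral_eq_lintegral_ofReal (hi.mono_set Ioo_subset_Ioc_self)]
  exact ae_restrict_of_forall_mem measurableSet_Ioo hf

lemma ker1 (a u : ℝ) (ha : 0 < a) (hu : u ∈ Ioo (0:ℝ) 1) :
    ∫⁻ s in Ioo (0:ℝ) (1/2), ENNReal.ofReal ((u + s * (1 - u)) ^ (a - 1) *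
      (a * (1 - s) ^ (-a - 1))) = ENNReal.ofReal ((1 + u) ^ a - u ^ a) := by
  have h2 : 0 < 1 - u := by linarith [hu.2]
  have h3 := hu.1
  have := ftc 0 (1/2) (by norm_num) (fun s => ((u + s * (1 - u)) / (1 - s)) ^ a)
    (fun s => (u + s * (1 - u)) ^ (a - 1) * (a * (1 - s) ^ (-a - 1))) ?_ ?_ ?_
  · rw [this]
    norm_num
    congr 3
    ring
  · refine ContinuousOn.rpow_const (ContinuousOn.div (by fun_prop) (by fun_prop) ?_) ?_
    · intro s hs; linarith [hs.2]
    · intro s hs; right; exact ha.le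
  · intro s hs
    have hs0 := hs.1
    have hs1 : 0 < 1 - s := by linarith [hs.2]
    have hD : 0 < u + s * (1 - u) := by positivity
    have d1 : HasDerivAt (fun s : ℝ => u + s * (1 - u)) (1 * (1 - u)) s :=
      ((hasDerivAt_id s).mul_const (1 - u)).const_add u
    have d2 : HasDerivAt (fun s : ℝ => 1 - s) (-1) s := (hasDerivAt_id s).const_sub 1
    refine ((d1.div d2 hs1.ne').rpow_const (p := a) (Or.inl (div_pos hD hs1).ne')).congr_deriv ?_
    rw [Pi.div_apply, div_rpow hD.le hs1.le]
    have e : (1 - s) ^ (-a - 1) = 1 / ((1 - s) ^ (a - 1) * (1 - s) ^ 2) := by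
      rw [eq_div_iff (by positivity), ← rpow_natCast, ← rpow_add hs1, ← rpow_add hs1,
        show -a - 1 + (a - 1 + ((2:ℕ):ℝ)) = 0 by push_cast; ring, rpow_zero]
    rw [e]
    field_simp
    ring
  · intro s hs
    have hs0 := hs.1
    have hs1 : 0 < 1 - s := by linarith [hs.2]
    positivity

lemma ker2 (b u : ℝ) (hb : b < 1) (hu : u ∈ Ioo (0:ℝ) 1) :
    ∫⁻ s in Ioo (1/2:ℝ) 1, ENNReal.ofReal ((u + s * (1 - u)) ^ (b - 2) *
      ((1 - b) * (1 - s) ^ (-b))) = ENNReal.ofReal ((1 + u) ^ (b - 1)) := by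
  have h2 : 0 < 1 - u := by linarith [hu.2]
  have h3 := hu.1
  have hb1 : 0 < 1 - b := by linarith
  have := ftc (1/2) 1 (by norm_num) (fun s => - ((1 - s) / (u + s * (1 - u))) ^ (1 - b))
    (fun s => (u + s * (1 - u)) ^ (b - 2) * ((1 - b) * (1 - s) ^ (-b))) ?_ ?_ ?_
  · rw [this]
    have e1 : (1 - 1/2) / (u + 1/2 * (1 - u)) = (1 + u)⁻¹ := by
      field_simp; ring
    simp only [e1]
    rw [inv_rpow (by positivity), ← rpow_neg (by positivity)]
    simp [zero_rpow hb1.ne']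
  · refine ContinuousOn.neg (ContinuousOn.rpow_const
      (ContinuousOn.div (by fun_prop) (by fun_prop) ?_) ?_)
    · intro s hs
      have : 0 < s := by linarith [hs.1]
      positivity
    · intro s hs; right; exact hb1.le
  · intro s hs
    have hs0 : 0 < s := by linarith [hs.1]
    have hs1 : 0 < 1 - s := by linarith [hs.2]
    have hD : 0 < u + s * (1 - u) := by positivity
    have d1 : HasDerivAt (fun s : ℝ => u + s * (1 - u)) (1 * (1 - u)) s :=
      ((hasDerivAt_id s).mul_const (1 - u)).const_add u
    have d2 : HasDerivAt (fun s : ℝ => 1 - s) (-1) s := (hasDerivAt_id s).const_sub 1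
    refine ((d2.div d1 hD.ne').rpow_const (p := 1 - b) (Or.inl (div_pos hs1 hD).ne')).neg.congr_deriv ?_
    rw [show 1 - b - 1 = -b by ring, Pi.div_apply, div_rpow hs1.le hD.le]
    have e : (u + s * (1 - u)) ^ (b - 2) =
        1 / ((u + s * (1 - u)) ^ (-b) * (u + s * (1 - u)) ^ 2) := by
      rw [eq_div_iff (by positivity), ← rpow_natCast, ← rpow_add hD, ← rpow_add hD,
        show b - 2 + (-b + ((2:ℕ):ℝ)) = 0 by push_cast; ring, rpow_zero]
    rw [e]
    field_simp
    ring
  · intro s hs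
    have hs0 : 0 < s := by linarith [hs.1]
    have hs1 : 0 < 1 - s := by linarith [hs.2]
    positivity

lemma Srefl (a b : ℝ) :
    ∫⁻ s in Ioo (1/2:ℝ) 1, ENNReal.ofReal (s ^ (-a - 1) * (1 - s) ^ (-b))
    = ∫⁻ s in Ioo (0:ℝ) (1/2), ENNReal.ofReal (s ^ (-b) * (1 - s) ^ (-a - 1)) := by
  have himg : (fun s : ℝ => 1 - s) '' Ioo (0:ℝ) (1/2) = Ioo (1/2:ℝ) 1 := by
    rw [image_const_sub_Ioo]; norm_num
  have := lintegral_image_eq_lintegral_abs_deriv_mul (f := fun s : ℝ => 1 - s)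
    (f' := fun _ => -1) (measurableSet_Ioo (a := (0:ℝ)) (b := 1/2))
    (fun s _ => ((hasDerivAt_id s).const_sub 1).hasDerivWithinAt)
    (fun x _ y _ h => by simpa using h)
    (fun s => ENNReal.ofReal (s ^ (-a - 1) * (1 - s) ^ (-b)))
  rw [himg] at this
  rw [this]
  simp [mul_comm]

lemma Sfin (a b : ℝ) (ha : 0 < a) (hb : b < 1) :
    ∫⁻ s in Ioo (0:ℝ) (1/2), ENNReal.ofReal (s ^ (-b) * (1 - s) ^ (-a - 1)) ≠ ⊤ := by
  have h := (intervalIntegral.integrableOn_Ioo_rpow_iff (s := -b) (t := 1/2) (by norm_num)).2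
    (by linarith)
  have h2 := (h.mul_const ((1/2:ℝ) ^ (-a - 1))).lintegral_lt_top
  refine ne_top_of_le_ne_top h2.ne ?_
  refine setLIntegral_mono' measurableSet_Ioo ?_
  intro s hs
  have := hs.1
  refine ENNReal.ofReal_le_ofReal (mul_le_mul_of_nonneg_left ?_ (by positivity))
  exact rpow_le_rpow_of_nonpos (by norm_num) (by linarith [hs.2]) (by linarith)

lemma main_ab (a b : ℝ) (ha : 0 < a) (hb : 0 < b) (hab : a + b < 1) :
    (Real.Gamma (1 - a) / Real.Gamma b) *
        (∫ u in Ioo (0:ℝ) 1, u ^ (-(a + b)) * (1 - u) ^ (b - 1) * (1 + u) ^ a)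
      - (Real.Gamma (1 - b) / Real.Gamma a) *
        (∫ u in Ioo (0:ℝ) 1, u ^ (-(a + b)) * (1 - u) ^ a * (1 + u) ^ (b - 1))
      = Real.Gamma (1 - a) * Real.Gamma (1 - b) := by
  obtain ⟨S, hS⟩ : ∃ S, S = ∫⁻ s in Ioo (0:ℝ) (1/2),
    ENNReal.ofReal (s ^ (-b) * (1 - s) ^ (-a - 1)) := ⟨_, rfl⟩
  have hSf : S ≠ ⊤ := hS ▸ Sfin a b ha (by linarith)
  have g1 : 0 < Real.Gamma a := Gamma_pos_of_pos ha
  have g2 : 0 < Real.Gamma b := Gamma_pos_of_pos hb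
  have g3 : 0 < Real.Gamma (1 - a) := Gamma_pos_of_pos (by linarith)
  have g4 : 0 < Real.Gamma (1 - b) := Gamma_pos_of_pos (by linarith)
  have g5 : 0 < Real.Gamma (1 - (a + b)) := Gamma_pos_of_pos (by linarith)
  have I1 : ∫ u in Ioo (0:ℝ) 1, u ^ (-(a + b)) * (1 - u) ^ (b - 1) * (1 + u) ^ a
      = Real.Gamma (1 - b) * Real.Gamma b
        + a * S.toReal * (Real.Gamma (1 - (a + b)) * Real.Gamma b / Real.Gamma (1 - a)) := by
    rw [integral_eq_lintegral_of_nonneg_ae]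
    rotate_left
    · refine ae_restrict_of_forall_mem measurableSet_Ioo fun u hu => ?_
      have h2 : 0 < 1 - u := by linarith [hu.2]
      have h3 := hu.1
      simp only [Pi.zero_apply]
      positivity
    · exact Measurable.aestronglyMeasurable (by fun_prop)
    have hL : ∫⁻ u in Ioo (0:ℝ) 1,
        ENNReal.ofReal (u ^ (-(a + b)) * (1 - u) ^ (b - 1) * (1 + u) ^ a)
        = ENNReal.ofReal (ProbabilityTheory.beta (1 - b) b)
          + (ENNReal.ofReal a * S) * ENNReal.ofReal (ProbabilityTheory.beta (1 - (a + b)) b) := by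
      have hf := fub (1 - (a + b)) b (by linarith) hb (fun s => a * (1 - s) ^ (-a - 1))
        (by fun_prop) (Ioo 0 (1/2)) measurableSet_Ioo (fun s hs => hs.1)
      have hS' : ∫⁻ s in Ioo (0:ℝ) (1/2), ENNReal.ofReal (s ^ (-b) * (a * (1 - s) ^ (-a - 1)))
          = ENNReal.ofReal a * S := by
        rw [hS, ← lintegral_const_mul _ (by fun_prop)]
        refine lintegral_congr fun s => ?_
        rw [← ENNReal.ofReal_mul ha.le]
        congr 1
        ring
      rw [hS'] at hf
      rw [← hf, ← beta_lint (1 - b) b (by linarith) hb, ← lintegral_add_left (by fun_prop)]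
      refine setLIntegral_congr_fun measurableSet_Ioo fun u hu => ?_
      have h2 : 0 < 1 - u := by linarith [hu.2]
      have h3 := hu.1
      have hk := ker1 a u ha hu
      have hm : 0 ≤ (1 + u) ^ a - u ^ a :=
        sub_nonneg.2 (rpow_le_rpow h3.le (by linarith) ha.le)
      rw [show -(1 - (a + b)) - b = a - 1 by ring, hk, ← ENNReal.ofReal_mul (by positivity),
        ← ENNReal.ofReal_add (by positivity) (by positivity)]
      congr 1
      rw [show 1 - b - 1 = -(a + b) + a by ring, rpow_add h3,
        show 1 - (a + b) - 1 = -(a + b) by ring]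
      ring
    have B1 := ProbabilityTheory.beta_pos (α := 1 - b) (β := b) (by linarith) hb
    have B2 := ProbabilityTheory.beta_pos (α := 1 - (a + b)) (β := b) (by linarith) hb
    rw [hL, ENNReal.toReal_add ENNReal.ofReal_ne_top (by finiteness), ENNReal.toReal_mul,
      ENNReal.toReal_mul, ENNReal.toReal_ofReal ha.le, ENNReal.toReal_ofReal B1.le,
      ENNReal.toReal_ofReal B2.le, ProbabilityTheory.beta, ProbabilityTheory.beta]
    rw [show 1 - b + b = 1 by ring, show 1 - (a + b) + b = 1 - a by ring, Gamma_one, div_one]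
  have I2 : ∫ u in Ioo (0:ℝ) 1, u ^ (-(a + b)) * (1 - u) ^ a * (1 + u) ^ (b - 1)
      = (1 - b) * S.toReal *
        (Real.Gamma (1 - (a + b)) * (a * Real.Gamma a) / ((1 - b) * Real.Gamma (1 - b))) := by
    rw [integral_eq_lintegral_of_nonneg_ae]
    rotate_left
    · refine ae_restrict_of_forall_mem measurableSet_Ioo fun u hu => ?_
      have h2 : 0 < 1 - u := by linarith [hu.2]
      have h3 := hu.1
      simp only [Pi.zero_apply]
      positivity
    · exact Measurable.aestronglyMeasurable (by fun_prop)
    have hb1 : 0 < 1 - b := by linarith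
    have hL : ∫⁻ u in Ioo (0:ℝ) 1,
        ENNReal.ofReal (u ^ (-(a + b)) * (1 - u) ^ a * (1 + u) ^ (b - 1))
        = (ENNReal.ofReal (1 - b) * S) *
          ENNReal.ofReal (ProbabilityTheory.beta (1 - (a + b)) (a + 1)) := by
      have hf := fub (1 - (a + b)) (a + 1) (by linarith) (by linarith)
        (fun s => (1 - b) * (1 - s) ^ (-b))
        (by fun_prop) (Ioo (1/2) 1) measurableSet_Ioo (fun s hs => by linarith [hs.1])
      have hS' : ∫⁻ s in Ioo (1/2:ℝ) 1,
          ENNReal.ofReal (s ^ (-(a + 1)) * ((1 - b) * (1 - s) ^ (-b)))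
          = ENNReal.ofReal (1 - b) * S := by
        rw [hS, ← Srefl, ← lintegral_const_mul _ (by fun_prop)]
        refine lintegral_congr fun s => ?_
        rw [← ENNReal.ofReal_mul hb1.le, show -(a + 1) = -a - 1 by ring]
        congr 1
        ring
      rw [hS'] at hf
      rw [← hf]
      refine setLIntegral_congr_fun measurableSet_Ioo fun u hu => ?_
      have h2 : 0 < 1 - u := by linarith [hu.2]
      have h3 := hu.1
      have hk := ker2 b u (by linarith) hu
      rw [show -(1 - (a + b)) - (a + 1) = b - 2 by ring, hk,
        ← ENNReal.ofReal_mul (by positivity)]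
      rw [show 1 - (a + b) - 1 = -(a + b) by ring, show a + 1 - 1 = a by ring]
    have B2 := ProbabilityTheory.beta_pos (α := 1 - (a + b)) (β := a + 1)
      (by linarith) (by linarith)
    rw [hL, ENNReal.toReal_mul, ENNReal.toReal_mul, ENNReal.toReal_ofReal hb1.le,
      ENNReal.toReal_ofReal B2.le, ProbabilityTheory.beta, Gamma_add_one ha.ne',
      show 1 - (a + b) + (a + 1) = (1 - b) + 1 by ring, Gamma_add_one hb1.ne']
  rw [I1, I2]
  have hb1 : 1 - b ≠ 0 := by linarith
  field_simp
  ring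

theorem stmt_9 (α ρ : ℝ) (hα : α ∈ Ioo (0:ℝ) 1) (hρ : ρ ∈ Ioo (0:ℝ) 1) :
    (Real.Gamma (1 - α * ρ) / Real.Gamma (α * (1 - ρ))) *
        (∫ u in Ioo (0:ℝ) 1,
          u ^ (-α) * (1 - u) ^ (α * (1 - ρ) - 1) * (1 + u) ^ (α * ρ))
      - (Real.Gamma (1 - α * (1 - ρ)) / Real.Gamma (α * ρ)) *
        (∫ u in Ioo (0:ℝ) 1,
          u ^ (-α) * (1 - u) ^ (α * ρ) * (1 + u) ^ (α * (1 - ρ) - 1))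
      = Real.Gamma (1 - α * ρ) * Real.Gamma (1 - α * (1 - ρ)) := by
  have e : α * ρ + α * (1 - ρ) = α := by ring
  have h := main_ab (α * ρ) (α * (1 - ρ)) (mul_pos hα.1 hρ.1)
    (mul_pos hα.1 (by linarith [hρ.2])) (by rw [e]; exact hα.2)
  rw [e] at h
  exact h
end

section
/- Let α ∈ (0,1) and ρ ∈ (0,1) with ρ̂ := 1 - ρ. Then ∫₀¹ (1-y)^{αρ̂-1} (1+y)^{αρ-1} dy + ∫₀¹ (1-y)^{αρ-1} (1+y)^{αρ̂-1} dy = 2^{α-1} Γ(αρ) Γ(αρ̂) / Γ(α). -/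
open MeasureTheory Real Set

lemma beta_aux (a b : ℝ) (ha : 0 < a) (hb : 0 < b) :
    IntervalIntegrable (fun x : ℝ => x ^ (a-1) * (1-x)^(b-1)) volume 0 1 ∧
    ∫ x in (0:ℝ)..1, x ^ (a-1) * (1-x)^(b-1) = Real.Gamma a * Real.Gamma b / Real.Gamma (a+b) := by
  have hcast : ∀ x ∈ Ioc (0:ℝ) 1, (x:ℂ) ^ ((a:ℂ)-1) * (1-(x:ℂ))^((b:ℂ)-1)
      = ((x ^ (a-1) * (1-x)^(b-1) : ℝ) : ℂ) := by
    intro x hx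
    rw [Complex.ofReal_mul, Complex.ofReal_cpow hx.1.le, Complex.ofReal_cpow (by linarith [hx.2])]
    push_cast
    rfl
  constructor
  · have h := Complex.betaIntegral_convergent (u := a) (v := b) (by simpa) (by simpa)
    rw [intervalIntegrable_iff_integrableOn_Ioc_of_le zero_le_one] at h ⊢
    have h2 := (h.congr_fun hcast measurableSet_Ioc).re
    simp only [Complex.ofReal_re, RCLike.re_eq_complex_re] at h2
    exact h2
  · have h := Complex.betaIntegral_eq_Gamma_mul_div a b (by simpa) (by simpa)
    rw [Complex.betaIntegral, intervalIntegral.integral_of_le zero_le_one,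
      setIntegral_congr_fun measurableSet_Ioc hcast, integral_complex_ofReal] at h
    rw [intervalIntegral.integral_of_le zero_le_one]
    rw [← Complex.ofReal_add] at h
    simp only [Complex.Gamma_ofReal] at h
    exact_mod_cast h

lemma scale_aux (a b y : ℝ) (h0 : 0 < y) (h1 : y < 1) :
    (1 - y) ^ (b - 1) * (1 + y) ^ (a - 1) =
      2 ^ (a + b - 2) * ((1/2 + y/2) ^ (a-1) * (1/2 - y/2)^(b-1)) := by
  have e1 : 1/2 + y/2 = (1+y)/2 := by ring
  have e2 : 1/2 - y/2 = (1-y)/2 := by ring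
  have e3 : a + b - 2 = (a-1) + (b-1) := by ring
  rw [e1, e2, e3, div_rpow (by linarith) (by norm_num), div_rpow (by linarith) (by norm_num),
    rpow_add (by norm_num)]
  have := rpow_pos_of_pos (show (0:ℝ) < 2 by norm_num) (a-1)
  have := rpow_pos_of_pos (show (0:ℝ) < 2 by norm_num) (b-1)
  field_simp

theorem stmt_10 (α ρ : ℝ) (hα : α ∈ Ioo (0:ℝ) 1) (hρ : ρ ∈ Ioo (0:ℝ) 1) :
    (∫ y in Ioo (0:ℝ) 1, (1 - y) ^ (α * (1 - ρ) - 1) * (1 + y) ^ (α * ρ - 1))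
      + (∫ y in Ioo (0:ℝ) 1, (1 - y) ^ (α * ρ - 1) * (1 + y) ^ (α * (1 - ρ) - 1))
      = 2 ^ (α - 1) * Real.Gamma (α * ρ) * Real.Gamma (α * (1 - ρ)) / Real.Gamma α := by
  obtain ⟨a, ha⟩ : ∃ a, a = α * ρ := ⟨_, rfl⟩
  obtain ⟨b, hb⟩ : ∃ b, b = α * (1 - ρ) := ⟨_, rfl⟩
  have hab : α = a + b := by rw [ha, hb]; ring
  have ha0 : 0 < a := ha ▸ mul_pos hα.1 hρ.1
  have hb0 : 0 < b := hb ▸ mul_pos hα.1 (by linarith [hρ.2])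
  rw [← ha, ← hb, hab]
  obtain ⟨hI, hB⟩ := beta_aux a b ha0 hb0
  set F : ℝ → ℝ := fun x => x ^ (a-1) * (1-x)^(b-1) with hF
  have s1 : ∫ y in Ioo (0:ℝ) 1, (1 - y) ^ (b - 1) * (1 + y) ^ (a - 1)
      = 2 ^ (a+b-2) * (2 * ∫ x in (1/2:ℝ)..1, F x) := by
    have h := intervalIntegral.integral_comp_add_div (a := 0) (b := 1) F (two_ne_zero) (1/2)
    rw [smul_eq_mul, show (1/2:ℝ) + 0/2 = 1/2 by norm_num, show (1/2:ℝ) + 1/2 = 1 by norm_num] at h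
    rw [← h, intervalIntegral.integral_of_le zero_le_one, integral_Ioc_eq_integral_Ioo,
      ← integral_const_mul]
    refine setIntegral_congr_fun measurableSet_Ioo fun y hy => ?_
    simp only [hF]
    rw [scale_aux a b y hy.1 hy.2]
    ring_nf
  have s2 : ∫ y in Ioo (0:ℝ) 1, (1 - y) ^ (a - 1) * (1 + y) ^ (b - 1)
      = 2 ^ (a+b-2) * (2 * ∫ x in (0:ℝ)..(1/2), F x) := by
    have h := intervalIntegral.integral_comp_sub_div (a := 0) (b := 1) F (two_ne_zero) (1/2)
    rw [smul_eq_mul, show (1/2:ℝ) - 0/2 = 1/2 by norm_num, show (1/2:ℝ) - 1/2 = 0 by norm_num] at h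
    rw [← h, intervalIntegral.integral_of_le zero_le_one, integral_Ioc_eq_integral_Ioo,
      ← integral_const_mul]
    refine setIntegral_congr_fun measurableSet_Ioo fun y hy => ?_
    simp only [hF]
    rw [scale_aux b a y hy.1 hy.2]
    ring_nf
  have i1 : IntervalIntegrable F volume 0 (1/2) := hI.mono_set (by
    rw [uIcc_of_le (by norm_num), uIcc_of_le (by norm_num)]
    exact Icc_subset_Icc le_rfl (by norm_num))
  have i2 : IntervalIntegrable F volume (1/2) 1 := hI.mono_set (by
    rw [uIcc_of_le (by norm_num), uIcc_of_le (by norm_num)]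
    exact Icc_subset_Icc (by norm_num) le_rfl)
  have hs := intervalIntegral.integral_add_adjacent_intervals i1 i2
  have hB' : ∫ x in (0:ℝ)..1, F x = Real.Gamma a * Real.Gamma b / Real.Gamma (a+b) := hB
  have hp : (2:ℝ) ^ (a+b-1) = 2 ^ (a+b-2) * 2 := by
    rw [← rpow_add_one (by norm_num)]; congr 1; ring
  rw [s1, s2, hp, mul_assoc (2 ^ (a+b-2) * 2), mul_div_assoc, ← hB', ← hs]
  ring
end

section
/- For all real numbers u ∈ [0,1) and y ≥ 0 with u + y > 0, ∫_u^1 (1-v)^{1/2} (v-u)^{-1/2} (v+y)^{-2} dv = (π/2) (1-u) (1+y)^{-1/2} (u+y)^{-3/2}. -/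
open MeasureTheory Real Set

theorem rpow_neg_half_aux (x : ℝ) (hx : 0 ≤ x) : x ^ (-(1:ℝ)/2) = 1 / √x := by
  rw [show (-(1:ℝ)/2) = -((1:ℝ)/2) by ring, rpow_neg hx, ← sqrt_eq_rpow, one_div]

theorem deriv_aux (u y v : ℝ) (hu0 : 0 ≤ u) (hy : 0 ≤ y) (huy : 0 < u + y)
    (h1 : u < v) (h2 : v < 1) :
    HasDerivAt (fun v : ℝ => √((1 - v) * (v - u)) / ((u + y) * (v + y))
      - (1 - u) / ((u + y) * (√(u + y) * √(1 + y))) *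
        arcsin (√((u + y) * (1 - v) / ((1 - u) * (v + y)))))
      (√(1 - v) * (1 / √(v - u)) * (1 / (v + y) ^ 2)) v := by
  have hA := huy
  have hB : 0 < 1 + y := by linarith
  have hL : 0 < 1 - u := by linarith
  have hV : 0 < v + y := by linarith
  have ha : 0 < 1 - v := by linarith
  have hb : 0 < v - u := by linarith
  have hw : 0 < (u + y) * (1 - v) / ((1 - u) * (v + y)) := by positivity
  have h1w : 1 - (u + y) * (1 - v) / ((1 - u) * (v + y))
      = (1 + y) * (v - u) / ((1 - u) * (v + y)) := by
    field_simp; ring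
  have hw1 : 0 < 1 - (u + y) * (1 - v) / ((1 - u) * (v + y)) := by
    rw [h1w]; positivity
  have dw : HasDerivAt (fun v : ℝ => (u + y) * (1 - v) / ((1 - u) * (v + y)))
      (-((u + y) * (1 + y)) / ((1 - u) * (v + y) ^ 2)) v := by
    have := (((hasDerivAt_id v).const_sub 1).const_mul (u + y)).div
      (((hasDerivAt_id v).add_const y).const_mul (1 - u)) (by simp only [id]; positivity)
    refine HasDerivAt.congr_deriv this ?_
    simp only [id]
    field_simp; ring
  have dR : HasDerivAt (fun v : ℝ => (1 - v) * (v - u)) (1 + u - 2 * v) v := by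
    have := ((hasDerivAt_id v).const_sub 1).mul ((hasDerivAt_id v).sub_const u)
    refine HasDerivAt.congr_deriv this ?_
    simp only [id]
    ring
  have dR' := (dR.sqrt (by positivity)).div
    (((hasDerivAt_id v).add_const y).const_mul (u + y)) (by simp only [id]; positivity)
  have hs1 : √((u + y) * (1 - v) / ((1 - u) * (v + y))) < 1 := by
    rw [sqrt_lt' one_pos]; linarith
  have hs0 := sqrt_pos.2 hw
  have das := (hasDerivAt_arcsin (by linarith) hs1.ne).comp v (dw.sqrt hw.ne')
  have := dR'.sub (das.const_mul ((1 - u) / ((u + y) * (√(u + y) * √(1 + y)))))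
  refine HasDerivAt.congr_deriv this ?_
  simp only [id]
  rw [sq_sqrt hw.le, h1w, sqrt_div (by positivity), sqrt_div (by positivity),
    sqrt_mul hB.le, sqrt_mul hA.le, sqrt_mul ha.le]
  have ea := sq_sqrt ha.le
  have eb := sq_sqrt hb.le
  have ep := sq_sqrt hA.le
  have eq := sq_sqrt hB.le
  have es := sq_sqrt (mul_pos hL hV).le
  have pa := sqrt_pos.2 ha
  have pb := sqrt_pos.2 hb
  have pp := sqrt_pos.2 hA
  have pq := sqrt_pos.2 hB
  have ps := sqrt_pos.2 (mul_pos hL hV)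
  generalize √(1 - v) = a at *
  generalize √(v - u) = b at *
  generalize √(u + y) = p at *
  generalize √(1 + y) = q at *
  generalize √((1 - u) * (v + y)) = s at *
  have key : (1 - u) / ((u + y) * (p * q)) *
      (1 / (q * b / s) * (-((u + y) * (1 + y)) / ((1 - u) * (v + y) ^ 2) / (2 * (p * a / s))))
      = - (1 - u) / (2 * (u + y) * (v + y) * (a * b)) := by
    have : (1 - u) / ((u + y) * (p * q)) *
      (1 / (q * b / s) * (-((u + y) * (1 + y)) / ((1 - u) * (v + y) ^ 2) / (2 * (p * a / s))))
      = - (s ^ 2 * (1 + y)) / (2 * p ^ 2 * q ^ 2 * a * b * (v + y) ^ 2) := by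
      field_simp
    rw [this, ep, eq, es]
    field_simp
  rw [key]
  field_simp
  rw [ea, eb]
  ring

theorem stmt_12 (u y : ℝ) (hu : u ∈ Ico (0:ℝ) 1) (hy : 0 ≤ y) (huy : 0 < u + y) :
    (∫ v in Ioo u 1,
        (1 - v) ^ ((1:ℝ)/2) * (v - u) ^ (-(1:ℝ)/2) * (v + y) ^ (-(2:ℝ)))
      = (Real.pi / 2) * (1 - u) * (1 + y) ^ (-(1:ℝ)/2) * (u + y) ^ (-(3:ℝ)/2) := by
  obtain ⟨hu0, hu1⟩ := hu
  have hB : 0 < 1 + y := by linarith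
  have hL : 0 < 1 - u := by linarith
  have e : (∫ v in Ioo u 1,
        (1 - v) ^ ((1:ℝ)/2) * (v - u) ^ (-(1:ℝ)/2) * (v + y) ^ (-(2:ℝ)))
      = ∫ v in Ioo u 1, √(1 - v) * (1 / √(v - u)) * (1 / (v + y) ^ 2) := by
    apply setIntegral_congr_fun measurableSet_Ioo
    intro v hv
    have hV : 0 < v + y := by linarith [hv.1]
    simp only
    rw [rpow_neg_half_aux _ (by linarith [hv.1]), ← sqrt_eq_rpow, rpow_neg hV.le,
      show (2:ℝ) = ((2:ℕ):ℝ) by norm_num, rpow_natCast, one_div ((v + y) ^ 2)]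
  rw [e, ← integral_Ioc_eq_integral_Ioo, ← intervalIntegral.integral_of_le hu1.le]
  have hc : ContinuousOn (fun v : ℝ => √((1 - v) * (v - u)) / ((u + y) * (v + y))
      - (1 - u) / ((u + y) * (√(u + y) * √(1 + y))) *
        arcsin (√((u + y) * (1 - v) / ((1 - u) * (v + y))))) (Icc u 1) := by
    have h0 : ∀ v ∈ Icc u 1, (u + y) * (v + y) ≠ 0 := fun v hv => by
      have : 0 < v + y := by linarith [hv.1]
      positivity
    have h0' : ∀ v ∈ Icc u 1, (1 - u) * (v + y) ≠ 0 := fun v hv => by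
      have : 0 < v + y := by linarith [hv.1]
      positivity
    refine ContinuousOn.sub (ContinuousOn.div (by fun_prop) (by fun_prop) h0) ?_
    refine continuousOn_const.mul (continuous_arcsin.comp_continuousOn ?_)
    exact (ContinuousOn.div (by fun_prop) (by fun_prop) h0').sqrt
  have hd := fun v (hv : v ∈ Ioo u 1) => deriv_aux u y v hu0 hy huy hv.1 hv.2
  rw [intervalIntegral.integral_eq_sub_of_hasDerivAt_of_le hu1.le hc hd]
  · have h1 : (u + y) * (1 - u) / ((1 - u) * (u + y)) = 1 := by field_simp
    rw [h1, rpow_neg_half_aux _ hB.le, show (-(3:ℝ)/2) = -(1:ℝ)/2 + -1 by ring,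
      rpow_add huy, rpow_neg_half_aux _ huy.le, rpow_neg_one]
    simp
    field_simp
  · rw [intervalIntegrable_iff_integrableOn_Ioc_of_le hu1.le]
    exact intervalIntegral.integrableOn_deriv_of_nonneg hc hd (fun v _ => by positivity)
end

section
/- For every real number λ > 0, ∫₀^∞ e^{-λx} [ (1-e^{-x})^{-1/2} (1+e^{-x})^{1/2} + (1-e^{-x})^{1/2} (1+e^{-x})^{-1/2} ] dx = √π · Γ(λ/2) / Γ((λ+1)/2). -/
open MeasureTheory Real Set

theorem stmt_14_beta (a b : ℝ) (ha : 0 < a) (hb : 0 < b) :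
    ∫ t in Ioo (0:ℝ) 1, t ^ (a - 1) * (1 - t) ^ (b - 1)
      = Real.Gamma a * Real.Gamma b / Real.Gamma (a + b) := by
  have h := ProbabilityTheory.beta_eq_betaIntegralReal a b ha hb
  rw [ProbabilityTheory.beta] at h
  rw [h, Complex.betaIntegral, intervalIntegral.integral_of_le zero_le_one,
    ← integral_Ioc_eq_integral_Ioo]
  have : ∀ t ∈ Ioc (0:ℝ) 1, (t:ℂ) ^ ((a:ℂ) - 1) * (1 - (t:ℂ)) ^ ((b:ℂ) - 1)
      = ((t ^ (a - 1) * (1 - t) ^ (b - 1) : ℝ) : ℂ) := by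
    intro t ht
    rw [Complex.ofReal_mul, Complex.ofReal_cpow ht.1.le, Complex.ofReal_cpow (by linarith [ht.2])]
    push_cast
    rfl
  rw [setIntegral_congr_fun measurableSet_Ioc this, integral_complex_ofReal, Complex.ofReal_re]

theorem stmt_14_image : (fun x : ℝ => Real.exp (-2 * x)) '' Ioi 0 = Ioo 0 1 := by
  ext t
  constructor
  · rintro ⟨x, hx, rfl⟩
    have : (0:ℝ) < x := hx
    exact ⟨Real.exp_pos _, Real.exp_lt_one_iff.mpr (by linarith)⟩
  · rintro ⟨h0, h1⟩
    refine ⟨-(Real.log t) / 2, ?_, ?_⟩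
    · have := Real.log_neg h0 h1
      show 0 < -(Real.log t) / 2
      linarith
    · show Real.exp (-2 * (-(Real.log t) / 2)) = t
      rw [show -2 * (-(Real.log t) / 2) = Real.log t by ring, Real.exp_log h0]

theorem stmt_14 (l : ℝ) (hl : 0 < l) :
    (∫ x in Ioi (0:ℝ),
        Real.exp (-l * x) *
          ((1 - Real.exp (-x)) ^ (-(1:ℝ)/2) * (1 + Real.exp (-x)) ^ ((1:ℝ)/2)
            + (1 - Real.exp (-x)) ^ ((1:ℝ)/2) * (1 + Real.exp (-x)) ^ (-(1:ℝ)/2)))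
      = Real.sqrt Real.pi * Real.Gamma (l / 2) / Real.Gamma ((l + 1) / 2) := by
  have hB := stmt_14_beta (l / 2) (1 / 2) (by positivity) (by norm_num)
  rw [← stmt_14_image, integral_image_eq_integral_abs_deriv_smul (s := Ioi (0:ℝ))
    (f' := fun x => Real.exp (-2 * x) * (-2)) measurableSet_Ioi
    (fun x _ => by
      have h := ((hasDerivAt_id x).const_mul (-2:ℝ)).exp
      simpa using h.hasDerivWithinAt)
    (fun x _ y _ h => by
      have := Real.exp_injective h
      linarith)] at hB
  rw [Real.Gamma_one_half_eq, ← add_div, mul_comm (Real.Gamma (l / 2))] at hB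
  rw [← hB]
  refine setIntegral_congr_fun measurableSet_Ioi (fun x hx => ?_)
  have hx : (0:ℝ) < x := hx
  have hu1 : Real.exp (-x) < 1 := Real.exp_lt_one_iff.mpr (by linarith)
  have hu0 := Real.exp_pos (-x)
  have e2 : Real.exp (-2 * x) = Real.exp (-x) * Real.exp (-x) := by
    rw [← Real.exp_add]; congr 1; ring
  have habs : |Real.exp (-2 * x) * (-2)| = 2 * Real.exp (-2 * x) := by
    rw [abs_mul, abs_of_pos (Real.exp_pos _)]; norm_num [mul_comm]
  have he : Real.exp (-l * x) = Real.exp (-2 * x) * Real.exp (-2 * x) ^ (l / 2 - 1) := by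
    rw [← Real.exp_mul, ← Real.exp_add]; congr 1; ring
  simp only [smul_eq_mul]
  rw [habs, he]
  have hp : 0 < 1 - Real.exp (-x) := by linarith
  have hq : 0 < 1 + Real.exp (-x) := by linarith
  have h1 : 1 - Real.exp (-2 * x) = (1 - Real.exp (-x)) * (1 + Real.exp (-x)) := by
    rw [e2]; ring
  have key : ∀ p : ℝ, 0 < p → p ^ ((1:ℝ)/2) = p * p ^ (-(1:ℝ)/2) := by
    intro p hp
    rw [← Real.rpow_one_add' hp.le (by norm_num)]; norm_num
  rw [h1, Real.mul_rpow hp.le hq.le, key _ hp, key _ hq,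
    show (1:ℝ) / 2 - 1 = -(1:ℝ)/2 by norm_num]
  ring
end
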